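/- arXiv:2010.00498 — 11 statements merged into one kernel-verified Lean document; each statement's English description precedes it below -/
import Mathlib

section
/- There exist a function o : ℕ → ℕ with o(n) ≥ 7 for all n ≥ 1 and o(n) → ∞ as n → ∞, and two elements σ₁, σ₂ of the product group Ĝ = ∏_{n ≥ 1} Alt(o(n)) such that the subgroup H = ⟨σ₁, σ₂⟩ they generate satisfies: (a) H is dense in Ĝ for the product topology in which each factor Alt(o(n)) is discrete; (b) every H-orbit in X̂ = ∏_{n ≥ 1} Fin(o(n)) is dense, i.e. the coordinatewise action of H on X̂ is minimal; (c) for every x̂ ∈ X̂ and every n ≥ 0 the stabilizer subgroup K_n is finite, and card(K_n) → ∞ as n → ∞; (d) for every x̂ ∈ X̂ and every n ≥ 0 the centralizer subgroup Z_n is the trivial subgroup. (Hence the action of the 2-generated group H on the Cantor set X̂ is wild of finite type and algebraically stable with trivial centralizer direct limit group.) -/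
open Filter

/-- Discrete topology on the finite group of permutations of `Fin m`. -/
instance instPermFinTop (m : ℕ) : TopologicalSpace (Equiv.Perm (Fin m)) := ⊥

instance instPermFinDisc (m : ℕ) : DiscreteTopology (Equiv.Perm (Fin m)) := ⟨rfl⟩

/-- The Cantor set `X̂ = ∏_{n ≥ 1} Fin (o n)` (indexed here by all of `ℕ`,
the factor of index `n` corresponding to level `n+1` of the tree). -/
abbrev XB (o : ℕ → ℕ) : Type := ∀ n : ℕ, Fin (o n)

/-- The profinite product group `Ĝ = ∏_{n ≥ 1} Alt (o n)`. -/
abbrev GB (o : ℕ → ℕ) : Type := ∀ n : ℕ, alternatingGroup (Fin (o n))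

/-- The coordinatewise action of `Ĝ` on `X̂`. -/
def smulX (o : ℕ → ℕ) (g : GB o) (x : XB o) : XB o :=
  fun n => (g n : Equiv.Perm (Fin (o n))) (x n)

/-- The stabilizer subgroup `K_n`: elements of `Ĝ` acting as the identity on the
level-`n` cylinder `U_n` around `x`. -/
def KK (o : ℕ → ℕ) (x : XB o) (n : ℕ) : Set (GB o) :=
  {g | ∀ w : XB o, (∀ i, i < n → w i = x i) → smulX o g w = w}

/-- The setwise stabilizer `Û_n` of the level-`n` cylinder `U_n` around `x`. -/
def UU (o : ℕ → ℕ) (x : XB o) (n : ℕ) : Set (GB o) :=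
  {g | ∀ i, i < n → (g i : Equiv.Perm (Fin (o i))) (x i) = x i}

/-- The centralizer subgroup `Z_n`: elements fixing `x` and commuting with every
element of `Û_n`. -/
def ZZ (o : ℕ → ℕ) (x : XB o) (n : ℕ) : Set (GB o) :=
  {h | smulX o h x = x ∧ ∀ g ∈ UU o x n, h * g = g * h}

/-!
Take the `o n` to be distinct primes, and let `c` and `t` be the full rotation and a three-cycle in
every factor. By Jordan's theorem `c n` and `t n` generate `Alt (o n)`. Since the orders `o n` of
the `c n` are pairwise coprime, suitable powers of `c` converge to the element equal to `c n` in
factor `n` and trivial in all others. The closure of `⟨c, t⟩` thus meets factor `n` in a nontrivial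
subgroup, which is normal because `⟨c, t⟩` projects onto that factor; as `Alt (o n)` is simple, the
closure contains every factor, hence is everything.

Orbits are dense because `Ĝ` is transitive on `X̂`. The groups `K_n` and `Z_n` are computed factor
by factor: `K_n` is a product of `n` point stabilizers, and a point stabilizer in `Alt m` has
trivial centralizer within itself as soon as `m ≥ 5`.
-/

theorem normalClosure_singleton_eq_top {G : Type*} [Group G] [IsSimpleGroup G] {g : G}
    (hg : g ≠ 1) : Subgroup.normalClosure {g} = ⊤ :=
  Subgroup.normalClosure_normal.eq_bot_or_eq_top.resolve_left fun h =>
    hg (by simpa using Subgroup.normalClosure_eq_bot_iff.1 h)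

section Product

variable {ι : Type*} {G : ι → Type*}

theorem mem_closure_pi_of_forall_finset [∀ i, TopologicalSpace (G i)] {s : Set (∀ i, G i)}
    {x : ∀ i, G i} (h : ∀ I : Finset ι, ∃ y ∈ s, ∀ i ∈ I, y i = x i) : x ∈ closure s := by
  rw [mem_closure_iff]
  intro U hU hxU
  obtain ⟨I, u, hu, hIU⟩ := isOpen_pi_iff.1 hU x hxU
  obtain ⟨y, hys, hyx⟩ := h I
  exact ⟨y, hIU fun i hi => hyx i hi ▸ (hu i hi).2, hys⟩

variable [∀ i, Group (G i)]

theorem normal_comap_mulSingle [DecidableEq ι] {K : Subgroup (∀ i, G i)} {i : ι}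
    (hK : K.map (Pi.evalMonoidHom G i) = ⊤) : (K.comap (MonoidHom.mulSingle G i)).Normal where
  conj_mem a ha b := by
    obtain ⟨k, hk, rfl⟩ : b ∈ K.map (Pi.evalMonoidHom G i) := hK ▸ Subgroup.mem_top b
    have hconj : k * Pi.mulSingle i a * k⁻¹ = Pi.mulSingle i (k i * a * (k i)⁻¹) := by
      ext j
      rcases eq_or_ne j i with rfl | hji <;> simp [*]
    change Pi.mulSingle i (k i * a * (k i)⁻¹) ∈ K
    exact hconj ▸ K.mul_mem (K.mul_mem hk ha) (K.inv_mem hk)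

variable [∀ i, TopologicalSpace (G i)]

theorem eq_top_of_isClosed_of_forall_mulSingle_mem [DecidableEq ι] {K : Subgroup (∀ i, G i)}
    (hK : IsClosed (K : Set (∀ i, G i))) (h : ∀ i a, Pi.mulSingle i a ∈ K) : K = ⊤ := by
  refine (Subgroup.eq_top_iff' K).2 fun x =>
    hK.closure_subset (mem_closure_pi_of_forall_finset fun I => ?_)
  refine ⟨I.piecewise x 1, ?_, fun i hi => I.piecewise_eq_of_mem x 1 hi⟩
  exact Submonoid.pi_mem_of_mulSingle_mem_aux I _ (fun i hi => I.piecewise_eq_of_notMem x 1 hi)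
    fun i _ => h i _

theorem mulSingle_mem_closure_zpowers [DecidableEq ι] {c : ∀ i, G i} {i : ι}
    (hc : ∀ j ≠ i, (orderOf (c j)).Coprime (orderOf (c i))) :
    Pi.mulSingle i (c i) ∈ closure (Subgroup.zpowers c : Set (∀ i, G i)) := by
  refine mem_closure_pi_of_forall_finset fun I => ?_
  -- By Bézout, some `u * P` is `1` modulo the order of `c i` and `0` modulo the other orders.
  let P := ∏ j ∈ I.erase i, orderOf (c j)
  have hP : P.Coprime (orderOf (c i)) :=
    Nat.Coprime.prod_left fun j hj => hc j (Finset.ne_of_mem_erase hj)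
  obtain ⟨u, v, huv⟩ := Nat.isCoprime_iff_coprime.2 hP
  refine ⟨c ^ (u * P), Subgroup.zpow_mem_zpowers c _, fun j hj => ?_⟩
  rcases eq_or_ne j i with rfl | hji
  · rw [Pi.mulSingle_eq_same, Pi.pow_apply, eq_sub_of_add_eq huv, zpow_sub, zpow_mul', zpow_natCast,
      pow_orderOf_eq_one, one_zpow, inv_one, mul_one, zpow_one]
  · have hjP : orderOf (c j) ∣ P := Finset.dvd_prod_of_mem _ (Finset.mem_erase.2 ⟨hji, hj⟩)
    rw [Pi.mulSingle_eq_of_ne hji, Pi.pow_apply, zpow_mul', zpow_natCast,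
      orderOf_dvd_iff_pow_eq_one.1 hjP, one_zpow]

theorem dense_of_coprime_orderOf [∀ i, IsTopologicalGroup (G i)] {H : Subgroup (∀ i, G i)}
    (hH : ∀ i, H.map (Pi.evalMonoidHom G i) = ⊤) {c : ∀ i, G i} (hcH : c ∈ H)
    (hcop : Pairwise fun i j => (orderOf (c i)).Coprime (orderOf (c j)))
    (hc : ∀ i, Subgroup.normalClosure {c i} = ⊤) : Dense (H : Set (∀ i, G i)) := by
  classical
  suffices H.topologicalClosure = ⊤ from
    dense_iff_closure_eq.2 (congrArg (SetLike.coe (B := ∀ i, G i)) this)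
  refine eq_top_of_isClosed_of_forall_mulSingle_mem H.isClosed_topologicalClosure fun i a => ?_
  let N := H.topologicalClosure.comap (MonoidHom.mulSingle G i)
  have hN : N.Normal :=
    normal_comap_mulSingle (top_le_iff.1 (hH i ▸ Subgroup.map_mono H.le_topologicalClosure))
  have hcN : c i ∈ N :=
    closure_mono (Subgroup.zpowers_le.2 hcH) (mulSingle_mem_closure_zpowers fun _ hj => hcop hj)
  have hN_top : N = ⊤ :=
    top_le_iff.1 (hc i ▸ Subgroup.normalClosure_le_normal (Set.singleton_subset_iff.2 hcN))
  have haN : a ∈ N := hN_top ▸ Subgroup.mem_top a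
  exact haN

end Product

section Alternating

variable {α : Type*} [Fintype α] [DecidableEq α]

theorem exists_isThreeCycle_fixing {s : Finset α} (hs : s.card + 3 ≤ Fintype.card α) {z : α}
    (hz : z ∉ s) : ∃ g : alternatingGroup α,
      (g : Equiv.Perm α).IsThreeCycle ∧ (∀ x ∈ s, (g : Equiv.Perm α) x = x) ∧
        (g : Equiv.Perm α) z ≠ z := by
  have hcard : 1 < (insert z s)ᶜ.card := by
    rw [Finset.card_compl, Finset.card_insert_of_notMem hz]
    omega
  obtain ⟨a, ha, b, hb, hab⟩ := Finset.one_lt_card.1 hcard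
  simp only [Finset.mem_compl, Finset.mem_insert, not_or] at ha hb
  have hg := Equiv.Perm.isThreeCycle_swap_mul_swap_same (Ne.symm ha.1) (Ne.symm hb.1) hab
  refine ⟨⟨_, hg.mem_alternatingGroup⟩, hg, fun x hx => ?_, ?_⟩
  · rw [Equiv.Perm.mul_apply,
      Equiv.swap_apply_of_ne_of_ne (ne_of_mem_of_not_mem hx hz) (ne_of_mem_of_not_mem hx hb.2),
      Equiv.swap_apply_of_ne_of_ne (ne_of_mem_of_not_mem hx hz) (ne_of_mem_of_not_mem hx ha.2)]
  · rw [Equiv.Perm.mul_apply, Equiv.swap_apply_left,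
      Equiv.swap_apply_of_ne_of_ne hb.1 hab.symm]
    exact hb.1

theorem alternatingGroup_eq_one_of_commute_stabilizer (hα : 5 ≤ Fintype.card α) {x : α}
    {h : alternatingGroup α} (hx : (h : Equiv.Perm α) x = x)
    (hcomm : ∀ g : alternatingGroup α, (g : Equiv.Perm α) x = x → h * g = g * h) : h = 1 := by
  refine Subtype.ext (Equiv.ext fun y => ?_)
  by_contra hne
  have hy : (h : Equiv.Perm α) y ≠ y := hne
  -- A three-cycle fixing `x` and `y` but moving `h y` does not commute with `h`.
  have hyx : (h : Equiv.Perm α) y ≠ x := by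
    rintro rfl
    exact hy ((h : Equiv.Perm α).injective hx)
  have hs : ({x, y} : Finset α).card + 3 ≤ Fintype.card α := by
    grw [Finset.card_le_two, ← hα]
  obtain ⟨g, -, hg, hgy⟩ := exists_isThreeCycle_fixing hs (z := (h : Equiv.Perm α) y)
    (by simpa using ⟨hyx, hy⟩)
  have hy_comm := congrArg (fun k : alternatingGroup α => (k : Equiv.Perm α) y)
    (hcomm g (hg x (by simp)))
  simp only [Subgroup.coe_mul, Equiv.Perm.mul_apply, hg y (by simp)] at hy_comm
  exact hgy hy_comm.symm

theorem isPretransitive_of_isCycle_mem_of_support_eq_univ {H : Subgroup (Equiv.Perm α)}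
    {c : Equiv.Perm α} (hc : c.IsCycle) (hc_univ : c.support = Finset.univ) (hcH : c ∈ H) :
    MulAction.IsPretransitive H α where
  exists_smul_eq x y := by
    have hmoved (z : α) : c z ≠ z := Equiv.Perm.mem_support.1 (hc_univ ▸ Finset.mem_univ z)
    obtain ⟨k, hk⟩ := hc.sameCycle (hmoved x) (hmoved y)
    exact ⟨⟨c ^ k, H.zpow_mem hcH k⟩, hk⟩

theorem closure_cycle_threeCycle_eq_top (hα : (Fintype.card α).Prime) {c t : alternatingGroup α}
    (hc : (c : Equiv.Perm α).IsCycle) (hc_univ : (c : Equiv.Perm α).support = Finset.univ)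
    (ht : (t : Equiv.Perm α).IsThreeCycle) : Subgroup.closure {c, t} = ⊤ := by
  let H := (Subgroup.closure {c, t}).map (alternatingGroup α).subtype
  have hcH : (c : Equiv.Perm α) ∈ H :=
    Subgroup.mem_map_of_mem _ (Subgroup.mem_closure_of_mem (by simp))
  have htH : (t : Equiv.Perm α) ∈ H :=
    Subgroup.mem_map_of_mem _ (Subgroup.mem_closure_of_mem (by simp))
  have := isPretransitive_of_isCycle_mem_of_support_eq_univ hc hc_univ hcH
  -- A transitive group of prime degree is primitive, so Jordan's theorem applies.
  have hH : MulAction.IsPreprimitive H α :=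
    MulAction.IsPreprimitive.of_prime_card (Nat.card_eq_fintype_card (α := α) ▸ hα)
  have hle := Equiv.Perm.alternatingGroup_le_of_isPreprimitive_of_isThreeCycle_mem hH ht htH
  refine (Subgroup.eq_top_iff' _).2 fun a => ?_
  exact (Subgroup.mem_map_iff_mem (Subgroup.subtype_injective _)).1 (hle a.2)

end Alternating

theorem finRotate_mem_alternatingGroup {n : ℕ} (hn : Odd n) :
    finRotate n ∈ alternatingGroup (Fin n) := by
  obtain ⟨k, rfl⟩ := hn
  rw [Equiv.Perm.mem_alternatingGroup, sign_finRotate]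
  exact (even_two_mul k).neg_one_pow

section Action

variable {o : ℕ → ℕ}

theorem exists_dense_closure_pair (hprime : ∀ n, (o n).Prime) (ho : ∀ n, 5 ≤ o n)
    (hinj : Function.Injective o) :
    ∃ σ₁ σ₂ : GB o, Dense (Subgroup.closure {σ₁, σ₂} : Set (GB o)) := by
  have hc_mem (n : ℕ) : finRotate (o n) ∈ alternatingGroup (Fin (o n)) :=
    finRotate_mem_alternatingGroup ((hprime n).odd_of_ne_two (by have := ho n; omega))
  have hc_cycle (n : ℕ) : (finRotate (o n)).IsCycle :=
    isCycle_finRotate_of_le ((hprime n).two_le)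
  have hc_support (n : ℕ) : (finRotate (o n)).support = Finset.univ :=
    support_finRotate_of_le ((hprime n).two_le)
  let c : GB o := fun n => ⟨finRotate (o n), hc_mem n⟩
  have hc_order (n : ℕ) : orderOf (c n) = o n := by
    rw [← Subgroup.orderOf_coe, (hc_cycle n).orderOf, hc_support, Finset.card_univ,
      Fintype.card_fin]
  choose t ht using fun n => exists_isThreeCycle_fixing (α := Fin (o n)) (s := ∅)
    (z := ⟨0, (hprime n).pos⟩) (by simpa using by have := ho n; omega) (by simp)
  refine ⟨c, t, dense_of_coprime_orderOf (c := c) (fun n => ?_)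
    (Subgroup.mem_closure_of_mem (by simp)) (fun m n hmn => ?_) fun n => ?_⟩
  · rw [MonoidHom.map_closure, Set.image_pair]
    exact closure_cycle_threeCycle_eq_top (by simpa using hprime n) (hc_cycle n) (hc_support n)
      (ht n).1
  · simpa only [hc_order] using
      (Nat.coprime_primes (hprime m) (hprime n)).2 (hinj.ne hmn)
  · have : IsSimpleGroup (alternatingGroup (Fin (o n))) :=
      alternatingGroup.isSimpleGroup (by simpa using ho n)
    refine normalClosure_singleton_eq_top fun hc_one => (hprime n).ne_one ?_
    rw [← hc_order, hc_one, orderOf_one]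

theorem continuous_smulX (x : XB o) : Continuous fun g : GB o => smulX o g x :=
  continuous_pi fun n => (continuous_of_discreteTopology
    (f := fun a : alternatingGroup (Fin (o n)) => (a : Equiv.Perm (Fin (o n))) (x n))).comp
      (continuous_apply n)

theorem surjective_smulX (ho : ∀ n, 3 ≤ o n) (x : XB o) :
    Function.Surjective fun g : GB o => smulX o g x := by
  intro y
  have htrans (n : ℕ) : ∃ a : alternatingGroup (Fin (o n)), a • x n = y n :=
    (alternatingGroup.isPretransitive_of_three_le_card (Fin (o n))
      (by simpa using ho n)).exists_smul_eq _ _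
  choose g hg using htrans
  exact ⟨g, funext hg⟩

theorem dense_orbit_of_dense (ho : ∀ n, 3 ≤ o n) {H : Subgroup (GB o)}
    (hH : Dense (H : Set (GB o))) (x : XB o) : Dense {y : XB o | ∃ h ∈ H, smulX o h x = y} :=
  (surjective_smulX ho x).denseRange.dense_image (continuous_smulX x) hH

theorem mem_KK_iff {x : XB o} {n : ℕ} {g : GB o} :
    g ∈ KK o x n ↔ (∀ i < n, (g i : Equiv.Perm (Fin (o i))) (x i) = x i) ∧ ∀ i ≥ n, g i = 1 := by
  constructor
  · refine fun hg => ⟨fun i _ => congrFun (hg x fun _ _ => rfl) i, fun i hi => ?_⟩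
    refine Subtype.ext (Equiv.ext fun y => ?_)
    have hw := hg (Function.update x i y) fun j hj => Function.update_of_ne (by omega) _ _
    simpa [smulX] using congrFun hw i
  · rintro ⟨hfix, hone⟩ w hw
    funext i
    rcases lt_or_ge i n with hi | hi
    · rw [smulX, hw i hi, hfix i hi]
    · rw [smulX, hone i hi]
      rfl

theorem finite_KK (x : XB o) (n : ℕ) : (KK o x n).Finite := by
  refine Set.Finite.of_injOn (t := Set.univ)
    (f := fun (g : GB o) (i : Fin n) => g i) (Set.mapsTo_univ _ _) ?_ Set.finite_univ
  intro g hg h hh hgh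
  funext i
  rcases lt_or_ge i n with hi | hi
  · exact congrFun hgh ⟨i, hi⟩
  · rw [(mem_KK_iff.1 hg).2 i hi, (mem_KK_iff.1 hh).2 i hi]

theorem KK_ssubset_KK_succ (ho : ∀ n, 4 ≤ o n) (x : XB o) (n : ℕ) :
    KK o x n ⊂ KK o x (n + 1) := by
  have hsub : KK o x n ⊆ KK o x (n + 1) := fun g hg w hw =>
    hg w fun i hi => hw i (hi.trans n.lt_succ_self)
  have : Nontrivial (Fin (o n)) := Fin.nontrivial_iff_two_le.2 (by have := ho n; omega)
  obtain ⟨z, hz⟩ := exists_ne (x n)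
  obtain ⟨g, -, hgx, hgz⟩ := exists_isThreeCycle_fixing (s := {x n}) (by simpa using ho n)
    (Finset.notMem_singleton.2 hz)
  refine (Set.ssubset_iff_of_subset hsub).2 ⟨(Pi.mulSingle n g : GB o),
    mem_KK_iff.2 ⟨fun i _ => ?_, fun i hi => ?_⟩, fun hmem => ?_⟩
  · rcases eq_or_ne i n with rfl | hin
    · simpa using hgx
    · simp [hin]
  · have hin : i ≠ n := by omega
    simp [hin]
  · have hg_one : g = 1 := by simpa using (mem_KK_iff.1 hmem).2 n le_rfl
    exact hgz (by simp [hg_one])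

theorem strictMono_card_KK (ho : ∀ n, 4 ≤ o n) (x : XB o) :
    StrictMono fun n => Nat.card (KK o x n) :=
  strictMono_nat_of_lt_succ fun n => Set.ncard_lt_ncard (KK_ssubset_KK_succ ho x n) (finite_KK x _)

theorem ZZ_eq_singleton_one (ho : ∀ n, 5 ≤ o n) (x : XB o) (n : ℕ) : ZZ o x n = {1} := by
  refine Set.eq_singleton_iff_unique_mem.2 ⟨⟨rfl, fun g _ => by simp⟩, fun h ⟨hx, hcomm⟩ => ?_⟩
  funext i
  refine alternatingGroup_eq_one_of_commute_stabilizer (by simpa using ho i) (congrFun hx i)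
    fun g hg => ?_
  have hgU : Pi.mulSingle i g ∈ UU o x n := by
    intro j _
    rcases eq_or_ne j i with rfl | hji
    · simpa using hg
    · simp [hji]
  simpa using congrFun (hcomm _ hgU) i

end Action

/-- There is a function `o` with `o n ≥ 7` for all `n` and `o n → ∞`, and two
elements `σ₁, σ₂` of `Ĝ = ∏ Alt (o n)` generating a subgroup `H` which is dense
in `Ĝ`, whose coordinatewise action on `X̂ = ∏ Fin (o n)` is minimal, and whose
stabilizer subgroups `K_n` are finite with `card K_n → ∞`, while all centralizer
subgroups `Z_n` are trivial: the action is wild of finite type and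
algebraically stable with trivial centralizer direct limit group. -/
theorem stmt0 :
    ∃ o : ℕ → ℕ, (∀ n, 7 ≤ o n) ∧ Tendsto o atTop atTop ∧
      ∃ σ₁ σ₂ : GB o,
        -- (a) `H = ⟨σ₁, σ₂⟩` is dense in `Ĝ` for the product topology
        Dense ((Subgroup.closure {σ₁, σ₂} : Subgroup (GB o)) : Set (GB o)) ∧
        -- (b) every `H`-orbit in `X̂` is dense, i.e. the action is minimal
        (∀ x : XB o,
          Dense {y : XB o | ∃ h ∈ (Subgroup.closure {σ₁, σ₂} : Subgroup (GB o)),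
            smulX o h x = y}) ∧
        -- (c) each `K_n` is finite and `card K_n → ∞`
        (∀ x : XB o, ∀ n : ℕ, (KK o x n).Finite) ∧
        (∀ x : XB o, Tendsto (fun n => Nat.card ↥(KK o x n)) atTop atTop) ∧
        -- (d) each `Z_n` is trivial
        (∀ x : XB o, ∀ n : ℕ, ZZ o x n = {1}) := by
  let o : ℕ → ℕ := fun n => Nat.nth Nat.Prime (n + 5)
  have ho_mono : StrictMono o :=
    (Nat.nth_strictMono Nat.infinite_setOfPred_prime).comp (add_left_strictMono (a := 5))
  have ho (n : ℕ) : 7 ≤ o n := le_trans (by omega) (Nat.add_two_le_nth_prime (n + 5))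
  have ho_ge {k : ℕ} (hk : k ≤ 7) (n : ℕ) : k ≤ o n := hk.trans (ho n)
  obtain ⟨σ₁, σ₂, hσ⟩ := exists_dense_closure_pair (fun n => Nat.prime_nth_prime (n + 5))
    (ho_ge (by norm_num)) ho_mono.injective
  exact ⟨o, ho, ho_mono.tendsto_atTop, σ₁, σ₂, hσ,
    dense_orbit_of_dense (ho_ge (by norm_num)) hσ, finite_KK,
    fun x => (strictMono_card_KK (ho_ge (by norm_num)) x).tendsto_atTop,
    ZZ_eq_singleton_one (ho_ge (by norm_num))⟩
end

section
/- For every n ≥ 0, K_n is a proper subgroup of K_{n+1}; for every n ≥ 1, K_n is an infinite group; and for every n ≥ 0, Z_n is the trivial subgroup {id}. (Hence the chain (K_n) is unbounded while the chain (Z_n) is bounded and trivial: any minimal action of a countably generated dense subgroup of the infinite wreath product A^∞ on X̂ is dynamically wild and algebraically stable with trivial centralizer direct limit group.) -/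
/-- `f` is a portrait map over the family of permutation groups `(A n)`:
there is a family assigning to every `n` and every length-`n` word `v` an
element `a_v ∈ A n` (the group of level `n+1`) such that the `n`-th coordinate
of `f x` is `a_{(x_0, …, x_{n-1})} (x n)`.  (Indices are shifted by one with
respect to the paper: the factor of index `n` is level `n+1` of the tree.) -/
def IsPortrait (X : ℕ → Type) (A : ∀ n, Subgroup (Equiv.Perm (X n)))
    (f : Equiv.Perm (∀ n, X n)) : Prop :=
  ∃ a : ∀ n : ℕ, ((i : Fin n) → X i.1) → A n,
    ∀ (x : ∀ n, X n) (n : ℕ),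
      f x n = (a n (fun i => x i.1) : Equiv.Perm (X n)) (x n)

/-- The level-`n` cylinder `U_n` around the point `x̂`. -/
def cylU (X : ℕ → Type) (x : ∀ n, X n) (n : ℕ) : Set (∀ n, X n) :=
  {w | ∀ i, i < n → w i = x i}

/-- The discriminant group `D`: portrait maps fixing the point `x̂`. -/
def discD (X : ℕ → Type) (A : ∀ n, Subgroup (Equiv.Perm (X n))) (x : ∀ n, X n) :
    Set (Equiv.Perm (∀ n, X n)) :=
  {g | IsPortrait X A g ∧ g x = x}

/-- The stabilizer subgroup `K_n`: portrait maps fixing the cylinder `U_n`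
pointwise. -/
def stabK (X : ℕ → Type) (A : ∀ n, Subgroup (Equiv.Perm (X n))) (x : ∀ n, X n) (n : ℕ) :
    Set (Equiv.Perm (∀ n, X n)) :=
  {g | IsPortrait X A g ∧ ∀ w ∈ cylU X x n, g w = w}

/-- The setwise stabilizer `Û_n`: portrait maps preserving the cylinder `U_n`
setwise. -/
def setstabU (X : ℕ → Type) (A : ∀ n, Subgroup (Equiv.Perm (X n))) (x : ∀ n, X n) (n : ℕ) :
    Set (Equiv.Perm (∀ n, X n)) :=
  {g | IsPortrait X A g ∧ g '' cylU X x n = cylU X x n}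

/-- The centralizer subgroup `Z_n`: portrait maps fixing `x̂` and commuting with
every element of `Û_n`. -/
def centZ (X : ℕ → Type) (A : ∀ n, Subgroup (Equiv.Perm (X n))) (x : ∀ n, X n) (n : ℕ) :
    Set (Equiv.Perm (∀ n, X n)) :=
  {h | IsPortrait X A h ∧ h x = x ∧ ∀ g ∈ setstabU X A x n, h * g = g * h}

/-!
A permutation in `A m` acting on the `m`-th coordinate of the sequences through a single vertex of
level `m`, and trivially elsewhere, is a portrait map supported in one cylinder. Putting the
cylinder inside `U_n` but outside `U_{n+1}` shows `K_n ≠ K_{n+1}`, and descending along a ray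
outside `U_1` gives infinitely many elements of `K_1`. If `h` moves `w`, choose such a map `g`
with `g w ≠ w` whose cylinder is deep enough to miss `h w`. Were `h` to commute with `g`, then
`h (g w) = g (h w) = h w`, contradicting the injectivity of `h`.
-/

section Cylinder

variable {X : ℕ → Type} {w y z : ∀ n, X n} {m n : ℕ}

theorem mem_cylU_self (w : ∀ n, X n) (n : ℕ) : w ∈ cylU X w n :=
  fun _ _ => rfl

theorem cylU_antitone (w : ∀ n, X n) : Antitone (cylU X w) :=
  fun _ _ hmn _ hz i hi => hz i (hi.trans_le hmn)

theorem mem_cylU_congr (h : ∀ i < n, y i = z i) : y ∈ cylU X w n ↔ z ∈ cylU X w n :=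
  forall₂_congr fun i hi => by rw [h i hi]

theorem update_mem_cylU_iff (hnm : n ≤ m) (b : X m) :
    Function.update z m b ∈ cylU X w n ↔ z ∈ cylU X w n :=
  mem_cylU_congr fun _ hi => Function.update_of_ne (hi.trans_le hnm).ne b z

theorem exists_mem_cylU_apply_eq (x : ∀ n, X n) (y : X n) : ∃ w ∈ cylU X x n, w n = y :=
  ⟨Function.update x n y, (update_mem_cylU_iff le_rfl y).2 (mem_cylU_self x n),
    Function.update_self n y x⟩

theorem disjoint_cylU {i : ℕ} (hm : i < m) (hn : i < n) (h : z i ≠ w i) :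
    Disjoint (cylU X z m) (cylU X w n) :=
  Set.disjoint_left.2 fun _ hz hw => h ((hz i hm).symm.trans (hw i hn))

theorem exists_ge_notMem_cylU (h : z ≠ w) (n : ℕ) : ∃ m ≥ n, z ∉ cylU X w m := by
  obtain ⟨i, hi⟩ := Function.ne_iff.1 h
  exact ⟨max n (i + 1), le_max_left _ _, fun hz => hi (hz i (by omega))⟩

end Cylinder

section VertexPerm

variable {X : ℕ → Type} {A : ∀ n, Subgroup (Equiv.Perm (X n))} {w x z : ∀ n, X n} {m n : ℕ}
  {a : Equiv.Perm (X m)}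

open Classical in
/-- The permutation of the boundary acting by `a` at the single vertex `(w 0, …, w (m - 1))`: it
applies `a` to the `m`-th coordinate of the sequences through this vertex and fixes all others.
Only the first `m` terms of `w` matter; a whole sequence is used to match `cylU`. -/
noncomputable def vertexPerm (w : ∀ n, X n) (m : ℕ) (a : Equiv.Perm (X m)) :
    Equiv.Perm (∀ n, X n) where
  toFun z := if z ∈ cylU X w m then Function.update z m (a (z m)) else z
  invFun z := if z ∈ cylU X w m then Function.update z m (a.symm (z m)) else z
  left_inv z := by by_cases hz : z ∈ cylU X w m <;> simp [hz, update_mem_cylU_iff]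
  right_inv z := by by_cases hz : z ∈ cylU X w m <;> simp [hz, update_mem_cylU_iff]

theorem vertexPerm_apply_of_mem (hz : z ∈ cylU X w m) :
    vertexPerm w m a z = Function.update z m (a (z m)) :=
  if_pos hz

theorem vertexPerm_apply_of_notMem (hz : z ∉ cylU X w m) : vertexPerm w m a z = z :=
  if_neg hz

theorem vertexPerm_apply_of_ne {i : ℕ} (hi : i ≠ m) : vertexPerm w m a z i = z i := by
  by_cases hz : z ∈ cylU X w m
  · rw [vertexPerm_apply_of_mem hz, Function.update_of_ne hi]
  · rw [vertexPerm_apply_of_notMem hz]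

theorem vertexPerm_apply_self : vertexPerm w m a w m = a (w m) := by
  rw [vertexPerm_apply_of_mem (mem_cylU_self w m), Function.update_self]

theorem vertexPerm_self_ne (ha : a (w m) ≠ w m) : vertexPerm w m a w ≠ w :=
  fun h => ha (vertexPerm_apply_self.symm.trans (congrFun h m))

theorem vertexPerm_injective_of_apply_ne {a : ∀ n, Equiv.Perm (X n)} (ha : ∀ n, a n (w n) ≠ w n) :
    Function.Injective fun n => vertexPerm w n (a n) := by
  intro k l hkl
  by_contra hne
  apply ha k
  calc a k (w k) = vertexPerm w k (a k) w k := vertexPerm_apply_self.symm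
    _ = vertexPerm w l (a l) w k := congrArg (fun g : Equiv.Perm (∀ n, X n) => g w k) hkl
    _ = w k := vertexPerm_apply_of_ne hne

theorem isPortrait_vertexPerm (ha : a ∈ A m) : IsPortrait X A (vertexPerm w m a) := by
  classical
  refine ⟨fun k v => if ∀ i, v i = w i then Pi.mulSingle (M := fun k => A k) m ⟨a, ha⟩ k else 1,
    fun z k => ?_⟩
  obtain rfl | hk := eq_or_ne k m
  · have hiff : z ∈ cylU X w k ↔ ∀ i : Fin k, z i = w i :=
      (Fin.forall_iff (p := fun i => z i = w i)).symm
    by_cases hz : z ∈ cylU X w k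
    · simp [vertexPerm_apply_of_mem hz, hiff.1 hz]
    · simp [vertexPerm_apply_of_notMem hz, mt hiff.2 hz]
  · simp [vertexPerm_apply_of_ne hk, Pi.mulSingle_eq_of_ne hk]

theorem vertexPerm_mem_stabK (ha : a ∈ A m) (h : Disjoint (cylU X w m) (cylU X x n)) :
    vertexPerm w m a ∈ stabK X A x n :=
  ⟨isPortrait_vertexPerm ha, fun _ hz => vertexPerm_apply_of_notMem (h.notMem_of_mem_right hz)⟩

theorem vertexPerm_mem_setstabU (ha : a ∈ A m) (hnm : n ≤ m) :
    vertexPerm w m a ∈ setstabU X A x n := by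
  refine ⟨isPortrait_vertexPerm ha, (Equiv.eq_preimage_iff_image_eq _ _ _).1 ?_⟩
  ext z
  exact (mem_cylU_congr fun i hi => vertexPerm_apply_of_ne (hi.trans_le hnm).ne).symm

end VertexPerm

section Stabilizers

variable {X : ℕ → Type} {A : ∀ n, Subgroup (Equiv.Perm (X n))}

theorem isPortrait_one : IsPortrait X A 1 :=
  ⟨fun _ _ => 1, fun _ _ => rfl⟩

theorem stabK_mono (x : ∀ n, X n) : Monotone (stabK X A x) :=
  fun _ _ hmn _ hg => ⟨hg.1, fun w hw => hg.2 w (cylU_antitone x hmn hw)⟩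

theorem stabK_strictMono (hA : ∀ n, ∀ y : X n, ∃ a ∈ A n, a y ≠ y) (x : ∀ n, X n) :
    StrictMono (stabK X A x) := by
  refine strictMono_nat_of_lt_succ fun n => ⟨stabK_mono x n.le_succ, fun hsub => ?_⟩
  obtain ⟨b, -, hb⟩ := hA n (x n)
  obtain ⟨w, hw, hwn⟩ := exists_mem_cylU_apply_eq x (b (x n))
  have hwx : w n ≠ x n := hwn.trans_ne hb
  obtain ⟨a, ha, hne⟩ := hA (n + 1) (w (n + 1))
  have hmem : vertexPerm w (n + 1) a ∈ stabK X A x (n + 1) :=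
    vertexPerm_mem_stabK ha (disjoint_cylU n.lt_succ_self n.lt_succ_self hwx)
  have hfix : vertexPerm w (n + 1) a w = w := (hsub hmem).2 w hw
  exact vertexPerm_self_ne hne hfix

theorem stabK_infinite (hA : ∀ n, ∀ y : X n, ∃ a ∈ A n, a y ≠ y) (x : ∀ n, X n) {n : ℕ}
    (hn : 0 < n) : (stabK X A x n).Infinite := by
  obtain ⟨b, -, hb⟩ := hA 0 (x 0)
  obtain ⟨w, -, hw0⟩ := exists_mem_cylU_apply_eq x (b (x 0))
  have hwx : w 0 ≠ x 0 := hw0.trans_ne hb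
  choose a ha hne using fun m => hA m (w m)
  exact Set.infinite_of_injective_forall_mem
    ((vertexPerm_injective_of_apply_ne hne).comp (add_left_injective 1))
    fun m => vertexPerm_mem_stabK (ha (m + 1)) (disjoint_cylU m.succ_pos hn hwx)

theorem eq_one_of_forall_commute_setstabU (hA : ∀ n, ∀ y : X n, ∃ a ∈ A n, a y ≠ y)
    {x : ∀ n, X n} {n : ℕ} {h : Equiv.Perm (∀ n, X n)}
    (hcomm : ∀ g ∈ setstabU X A x n, Commute h g) : h = 1 := by
  ext1 w
  by_contra hw
  obtain ⟨m, hnm, hm⟩ := exists_ge_notMem_cylU hw n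
  obtain ⟨a, ha, hne⟩ := hA m (w m)
  let g := vertexPerm w m a
  have hgw : h (g w) = h w :=
    calc h (g w) = g (h w) := DFunLike.congr_fun (hcomm g (vertexPerm_mem_setstabU ha hnm)) w
      _ = h w := vertexPerm_apply_of_notMem hm
  exact vertexPerm_self_ne hne (h.injective hgw)

theorem centZ_eq_singleton_one (hA : ∀ n, ∀ y : X n, ∃ a ∈ A n, a y ≠ y) (x : ∀ n, X n) (n : ℕ) :
    centZ X A x n = {1} :=
  Set.eq_singleton_iff_unique_mem.2
    ⟨⟨isPortrait_one, rfl, fun g _ => Commute.one_left g⟩,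
      fun _ hh => eq_one_of_forall_commute_setstabU hA hh.2.2⟩

end Stabilizers

theorem exists_mem_apply_ne_of_transitive {α : Type*} [Nontrivial α]
    {G : Subgroup (Equiv.Perm α)} (hG : ∀ y z : α, ∃ a ∈ G, a y = z) (y : α) :
    ∃ a ∈ G, a y ≠ y := by
  obtain ⟨z, hz⟩ := exists_ne y
  obtain ⟨a, ha, rfl⟩ := hG y z
  exact ⟨a, ha, hz⟩

theorem stmt1_general (X : ℕ → Type) (A : ∀ n, Subgroup (Equiv.Perm (X n)))
    (hA : ∀ n, ∀ y : X n, ∃ a ∈ A n, a y ≠ y) (x : ∀ n, X n) :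
    (∀ n : ℕ, stabK X A x n ⊂ stabK X A x (n + 1)) ∧
    (∀ n : ℕ, 1 ≤ n → (stabK X A x n).Infinite) ∧
    (∀ n : ℕ, centZ X A x n = {1}) :=
  ⟨fun n => stabK_strictMono hA x n.lt_succ_self, fun _ hn => stabK_infinite hA x hn,
    centZ_eq_singleton_one hA x⟩

/-- For a minimal action of the infinite wreath product `A^∞` (realized as the
group of portrait maps over a family of transitive groups `A n` on finite sets
`X n` with at least `2` elements) on the boundary `X̂` of the tree: every `K_n`
is a proper subgroup of `K_{n+1}`, every `K_n` with `n ≥ 1` is infinite, and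
every `Z_n` is trivial.  Hence the chain `(K_n)` is unbounded and the chain
`(Z_n)` is bounded and trivial: the action is dynamically wild and
algebraically stable with trivial centralizer direct limit group. -/
theorem stmt1 (X : ℕ → Type) [∀ n, Finite (X n)]
    (hcard : ∀ n, 2 ≤ Nat.card (X n))
    (A : ∀ n, Subgroup (Equiv.Perm (X n)))
    (htrans : ∀ n, ∀ y z : X n, ∃ a ∈ A n, a y = z)
    (x : ∀ n, X n) :
    (∀ n : ℕ, stabK X A x n ⊂ stabK X A x (n + 1)) ∧
    (∀ n : ℕ, 1 ≤ n → (stabK X A x n).Infinite) ∧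
    (∀ n : ℕ, centZ X A x n = {1}) := by
  have hX (n : ℕ) : Nontrivial (X n) := Finite.one_lt_card_iff_nontrivial.1 (hcard n)
  exact stmt1_general X A (fun n => exists_mem_apply_ne_of_transitive (htrans n)) x
end

section
/- Assume: (i) for every n, K_n(Ĥ) = Z_n(Ĥ); (ii) for every n there is m > n with K_n(Ĥ) a proper subgroup of K_m(Ĥ); (iii) Z_n(Ĝ) = {1} for every n; (iv) K_n(Ĝ) ≠ {1} for every n ≥ 1; (v) for every n there is m > n with K_n(Ĝ) a proper subgroup of K_m(Ĝ). Then for the product action: for every n there is m > n with K_n a proper subgroup of K_m, for every n there is m > n with Z_n a proper subgroup of Z_m (so both chains (K_n) and (Z_n) are unbounded), and for every n ≥ 1, Z_n is a proper subgroup of K_n. (Hence the product action is dynamically wild and algebraically wild.) -/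
/-- The stabilizer subgroup `K_n(Γ)`: elements of `Γ` fixing the subset `W`
pointwise. -/
def fixSet {Z : Type*} (Γ : Set (Equiv.Perm Z)) (W : Set Z) : Set (Equiv.Perm Z) :=
  {g | g ∈ Γ ∧ ∀ w ∈ W, g w = w}

/-- The setwise stabilizer `Ŵ(Γ)` of a subset `W`. -/
def setStab {Z : Type*} (Γ : Set (Equiv.Perm Z)) (W : Set Z) : Set (Equiv.Perm Z) :=
  {g | g ∈ Γ ∧ g '' W = W}

/-- The centralizer subgroup `Z_n(Γ)`: elements of `Γ` fixing the base point `z`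
and commuting with every element of the setwise stabilizer of `W`. -/
def centSet {Z : Type*} (Γ : Set (Equiv.Perm Z)) (z : Z) (W : Set Z) : Set (Equiv.Perm Z) :=
  {h | h ∈ Γ ∧ h z = z ∧ ∀ g ∈ setStab Γ W, h * g = g * h}

/-- The product group `Ĥ × Ĝ`, realized as the permutations of `X × Y` acting
coordinatewise with coordinates in `Ĥ` and `Ĝ`. -/
def prodGrp {X Y : Type*} (Hh : Subgroup (Equiv.Perm X)) (Gh : Subgroup (Equiv.Perm Y)) :
    Set (Equiv.Perm (X × Y)) :=
  {c | ∃ a ∈ Hh, ∃ b ∈ Gh, c = Equiv.prodCongr a b}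

/-!
A nonempty rectangle determines its sides, so the setwise stabilizer of `U_n × V_n` in `Ĥ × Ĝ`
is the product of the setwise stabilizers; hence `K_n` and `Z_n` of `Ĥ × Ĝ` are the products of
those of the factors. Since `Z_n = K_n` is unbounded for `Ĥ`, the first factor makes both chains
grow; since `Ĝ` has trivial `Z_n` and nontrivial `K_n`, the second keeps `Z_n` strictly below `K_n`.
-/

section Image2

variable {α β γ : Type*} {f : α → β → γ} {s s' : Set α} {t t' : Set β}

theorem image2_ssubset_image2_of_ssubset_left (hf : Function.Injective2 f)
    (hs : s ⊂ s') (ht : t ⊆ t') (ht' : t'.Nonempty) :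
    Set.image2 f s t ⊂ Set.image2 f s' t' := by
  obtain ⟨a, ha', ha⟩ := Set.exists_of_ssubset hs
  obtain ⟨b, hb⟩ := ht'
  refine (Set.ssubset_iff_of_subset (Set.image2_subset hs.subset ht)).2
    ⟨f a b, Set.mem_image2_of_mem ha' hb, fun hab => ?_⟩
  exact ha ((Set.mem_image2_iff hf).1 hab).1

theorem image2_ssubset_image2_of_ssubset_right (hf : Function.Injective2 f)
    (hs : s ⊆ s') (ht : t ⊂ t') (hs' : s'.Nonempty) :
    Set.image2 f s t ⊂ Set.image2 f s' t' := by
  rw [Set.image2_swap f s t, Set.image2_swap f s' t']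
  exact image2_ssubset_image2_of_ssubset_left (fun _ _ _ _ h => (hf h).symm) ht hs hs'

end Image2

section FixSet

variable {Z : Type*}

theorem fixSet_anti (Γ : Set (Equiv.Perm Z)) {W W' : Set Z} (h : W ⊆ W') :
    fixSet Γ W' ⊆ fixSet Γ W :=
  fun _ hg => ⟨hg.1, fun w hw => hg.2 w (h hw)⟩

theorem one_mem_fixSet (Γ : Subgroup (Equiv.Perm Z)) (W : Set Z) :
    1 ∈ fixSet (Γ : Set (Equiv.Perm Z)) W :=
  ⟨Γ.one_mem, fun _ _ => rfl⟩

theorem one_mem_setStab (Γ : Subgroup (Equiv.Perm Z)) (W : Set Z) :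
    1 ∈ setStab (Γ : Set (Equiv.Perm Z)) W :=
  ⟨Γ.one_mem, Set.image_id W⟩

theorem one_mem_centSet (Γ : Subgroup (Equiv.Perm Z)) (z : Z) (W : Set Z) :
    1 ∈ centSet (Γ : Set (Equiv.Perm Z)) z W :=
  ⟨Γ.one_mem, rfl, fun g _ => (Commute.one_left g).eq⟩

end FixSet

section ProdCongr

variable {X Y : Type*}

theorem prodCongr_injective2 [Nonempty X] [Nonempty Y] :
    Function.Injective2
      (Equiv.prodCongr : Equiv.Perm X → Equiv.Perm Y → Equiv.Perm (X × Y)) := by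
  intro a a' b b' h
  have hmap (u : X) (v : Y) : (a u, b v) = (a' u, b' v) := DFunLike.congr_fun h (u, v)
  inhabit X
  inhabit Y
  exact ⟨Equiv.ext fun u => congrArg Prod.fst (hmap u default),
    Equiv.ext fun v => congrArg Prod.snd (hmap default v)⟩

theorem prodCongr_mul_prodCongr (a a' : Equiv.Perm X) (b b' : Equiv.Perm Y) :
    (Equiv.prodCongr a b : Equiv.Perm (X × Y)) * Equiv.prodCongr a' b' =
      Equiv.prodCongr (a * a') (b * b') :=
  rfl

theorem commute_prodCongr_iff [Nonempty X] [Nonempty Y] {a a' : Equiv.Perm X}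
    {b b' : Equiv.Perm Y} :
    Commute (Equiv.prodCongr a b : Equiv.Perm (X × Y)) (Equiv.prodCongr a' b') ↔
      Commute a a' ∧ Commute b b' := by
  simp only [commute_iff_eq, prodCongr_mul_prodCongr]
  exact prodCongr_injective2.eq_iff

theorem prodCongr_image_prod_eq_iff {a : Equiv.Perm X} {b : Equiv.Perm Y} {U : Set X} {V : Set Y}
    (hU : U.Nonempty) (hV : V.Nonempty) :
    Equiv.prodCongr a b '' U ×ˢ V = U ×ˢ V ↔ a '' U = U ∧ b '' V = V := by
  rw [Equiv.prodCongr_apply, Set.prodMap_image_prod,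
    Set.prod_eq_prod_iff_of_nonempty ((hU.image a).prod (hV.image b))]

end ProdCongr

section ProdGrp

variable {X Y : Type*} {Hh : Subgroup (Equiv.Perm X)} {Gh : Subgroup (Equiv.Perm Y)}
  {x : X} {y : Y} {U U' : Set X} {V V' : Set Y}

theorem fixSet_prodGrp (hU : U.Nonempty) (hV : V.Nonempty) :
    fixSet (prodGrp Hh Gh) (U ×ˢ V) =
      Set.image2 Equiv.prodCongr (fixSet (Hh : Set (Equiv.Perm X)) U)
        (fixSet (Gh : Set (Equiv.Perm Y)) V) := by
  obtain ⟨x, hx⟩ := hU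
  obtain ⟨y, hy⟩ := hV
  ext c
  constructor
  · rintro ⟨⟨a, ha, b, hb, rfl⟩, hfix⟩
    exact ⟨a, ⟨ha, fun u hu => congrArg Prod.fst (hfix (u, y) ⟨hu, hy⟩)⟩,
      b, ⟨hb, fun v hv => congrArg Prod.snd (hfix (x, v) ⟨hx, hv⟩)⟩, rfl⟩
  · rintro ⟨a, ⟨ha, hafix⟩, b, ⟨hb, hbfix⟩, rfl⟩
    exact ⟨⟨a, ha, b, hb, rfl⟩, fun p hp => Prod.ext (hafix p.1 hp.1) (hbfix p.2 hp.2)⟩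

theorem setStab_prodGrp (hU : U.Nonempty) (hV : V.Nonempty) :
    setStab (prodGrp Hh Gh) (U ×ˢ V) =
      Set.image2 Equiv.prodCongr (setStab (Hh : Set (Equiv.Perm X)) U)
        (setStab (Gh : Set (Equiv.Perm Y)) V) := by
  ext c
  constructor
  · rintro ⟨⟨a, ha, b, hb, rfl⟩, hstab⟩
    obtain ⟨haU, hbV⟩ := (prodCongr_image_prod_eq_iff hU hV).1 hstab
    exact ⟨a, ⟨ha, haU⟩, b, ⟨hb, hbV⟩, rfl⟩
  · rintro ⟨a, ⟨ha, haU⟩, b, ⟨hb, hbV⟩, rfl⟩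
    exact ⟨⟨a, ha, b, hb, rfl⟩, (prodCongr_image_prod_eq_iff hU hV).2 ⟨haU, hbV⟩⟩

theorem centSet_prodGrp (hU : U.Nonempty) (hV : V.Nonempty) :
    centSet (prodGrp Hh Gh) (x, y) (U ×ˢ V) =
      Set.image2 Equiv.prodCongr (centSet (Hh : Set (Equiv.Perm X)) x U)
        (centSet (Gh : Set (Equiv.Perm Y)) y V) := by
  have : Nonempty X := ⟨x⟩
  have : Nonempty Y := ⟨y⟩
  ext c
  simp only [centSet, setStab_prodGrp hU hV, Set.forall_mem_image2]
  constructor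
  · rintro ⟨⟨a, ha, b, hb, rfl⟩, hfix, hcomm⟩
    refine ⟨a, ⟨ha, congrArg Prod.fst hfix, fun g hg => ?_⟩,
      b, ⟨hb, congrArg Prod.snd hfix, fun k hk => ?_⟩, rfl⟩
    · exact (commute_prodCongr_iff.1 (hcomm g hg 1 (one_mem_setStab Gh V))).1
    · exact (commute_prodCongr_iff.1 (hcomm 1 (one_mem_setStab Hh U) k hk)).2
  · rintro ⟨a, ⟨ha, hax, hacomm⟩, b, ⟨hb, hby, hbcomm⟩, rfl⟩
    exact ⟨⟨a, ha, b, hb, rfl⟩, Prod.ext hax hby,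
      fun g hg k hk => commute_prodCongr_iff.2 ⟨hacomm g hg, hbcomm k hk⟩⟩

theorem fixSet_prodGrp_ssubset_fixSet (hU : U.Nonempty) (hU' : U'.Nonempty) (hV' : V'.Nonempty)
    (hfix : fixSet (Hh : Set (Equiv.Perm X)) U ⊂ fixSet (Hh : Set (Equiv.Perm X)) U')
    (hV : V' ⊆ V) :
    fixSet (prodGrp Hh Gh) (U ×ˢ V) ⊂ fixSet (prodGrp Hh Gh) (U' ×ˢ V') := by
  have := hU.nonempty
  have := hV'.nonempty
  rw [fixSet_prodGrp hU (hV'.mono hV), fixSet_prodGrp hU' hV']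
  exact image2_ssubset_image2_of_ssubset_left prodCongr_injective2 hfix (fixSet_anti _ hV)
    ⟨1, one_mem_fixSet Gh V'⟩

theorem centSet_prodGrp_ssubset_centSet (hU : U.Nonempty) (hU' : U'.Nonempty)
    (hV : V.Nonempty) (hV' : V'.Nonempty)
    (hH : centSet (Hh : Set (Equiv.Perm X)) x U ⊂ centSet (Hh : Set (Equiv.Perm X)) x U')
    (hG : centSet (Gh : Set (Equiv.Perm Y)) y V ⊆ centSet (Gh : Set (Equiv.Perm Y)) y V') :
    centSet (prodGrp Hh Gh) (x, y) (U ×ˢ V) ⊂ centSet (prodGrp Hh Gh) (x, y) (U' ×ˢ V') := by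
  have : Nonempty X := ⟨x⟩
  have : Nonempty Y := ⟨y⟩
  rw [centSet_prodGrp hU hV, centSet_prodGrp hU' hV']
  exact image2_ssubset_image2_of_ssubset_left prodCongr_injective2 hH hG
    ⟨1, one_mem_centSet Gh y V'⟩

theorem centSet_prodGrp_ssubset_fixSet (hU : U.Nonempty) (hV : V.Nonempty)
    (hH : centSet (Hh : Set (Equiv.Perm X)) x U ⊆ fixSet (Hh : Set (Equiv.Perm X)) U)
    (hG : centSet (Gh : Set (Equiv.Perm Y)) y V ⊂ fixSet (Gh : Set (Equiv.Perm Y)) V) :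
    centSet (prodGrp Hh Gh) (x, y) (U ×ˢ V) ⊂ fixSet (prodGrp Hh Gh) (U ×ˢ V) := by
  have : Nonempty X := ⟨x⟩
  have : Nonempty Y := ⟨y⟩
  rw [centSet_prodGrp hU hV, fixSet_prodGrp hU hV]
  exact image2_ssubset_image2_of_ssubset_right prodCongr_injective2 hH hG
    ⟨1, one_mem_fixSet Hh U⟩

end ProdGrp

theorem stmt2_general {X Y : Type*}
    (Hh : Subgroup (Equiv.Perm X)) (Gh : Subgroup (Equiv.Perm Y))
    (x : X) (y : Y) (U : ℕ → Set X) (V : ℕ → Set Y)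
    (hxU : ∀ n, x ∈ U n) (hV : Antitone V) (hyV : ∀ n, y ∈ V n)
    (hflat : ∀ n, fixSet (Hh : Set (Equiv.Perm X)) (U n)
      = centSet (Hh : Set (Equiv.Perm X)) x (U n))
    (hHwild : ∀ n, ∃ m, n < m ∧ fixSet (Hh : Set (Equiv.Perm X)) (U n)
      ⊂ fixSet (Hh : Set (Equiv.Perm X)) (U m))
    (hGcent : ∀ n, centSet (Gh : Set (Equiv.Perm Y)) y (V n) = {1})
    (hGstab : ∀ n, 1 ≤ n → fixSet (Gh : Set (Equiv.Perm Y)) (V n) ≠ {1}) :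
    (∀ n, ∃ m, n < m ∧ fixSet (prodGrp Hh Gh) (U n ×ˢ V n)
      ⊂ fixSet (prodGrp Hh Gh) (U m ×ˢ V m)) ∧
    (∀ n, ∃ m, n < m ∧ centSet (prodGrp Hh Gh) (x, y) (U n ×ˢ V n)
      ⊂ centSet (prodGrp Hh Gh) (x, y) (U m ×ˢ V m)) ∧
    (∀ n, 1 ≤ n → centSet (prodGrp Hh Gh) (x, y) (U n ×ˢ V n)
      ⊂ fixSet (prodGrp Hh Gh) (U n ×ˢ V n)) := by
  have hU_ne (n : ℕ) : (U n).Nonempty := ⟨x, hxU n⟩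
  have hV_ne (n : ℕ) : (V n).Nonempty := ⟨y, hyV n⟩
  refine ⟨fun n => ?_, fun n => ?_, fun n hn => ?_⟩
  · obtain ⟨m, hnm, hfix⟩ := hHwild n
    exact ⟨m, hnm, fixSet_prodGrp_ssubset_fixSet (hU_ne n) (hU_ne m) (hV_ne m) hfix (hV hnm.le)⟩
  · obtain ⟨m, hnm, hfix⟩ := hHwild n
    rw [hflat n, hflat m] at hfix
    exact ⟨m, hnm, centSet_prodGrp_ssubset_centSet (hU_ne n) (hU_ne m) (hV_ne n) (hV_ne m) hfix
      ((hGcent n).trans (hGcent m).symm).subset⟩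
  · have hG : centSet (Gh : Set (Equiv.Perm Y)) y (V n) ⊂
        fixSet (Gh : Set (Equiv.Perm Y)) (V n) := by
      rw [hGcent n]
      exact (Set.singleton_subset_iff.2 (one_mem_fixSet Gh (V n))).ssubset_of_ne (hGstab n hn).symm
    exact centSet_prodGrp_ssubset_fixSet (hU_ne n) (hV_ne n) (hflat n).superset hG

/-- If the action of `Ĥ` on `X` (with base point `x` and decreasing subsets `U_n`)
is wild of flat type (`K_n(Ĥ) = Z_n(Ĥ)` with unbounded chain `(K_n(Ĥ))`), and the
action of `Ĝ` on `Y` (with base point `y` and subsets `V_n`) is dynamically wild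
with trivial centralizers (`Z_n(Ĝ)` trivial, `K_n(Ĝ)` nontrivial and unbounded),
then for the product action of `Ĥ × Ĝ` on `X × Y` both chains `(K_n)` and `(Z_n)`
are unbounded, and `Z_n` is a proper subgroup of `K_n` for all `n ≥ 1`: the
product action is dynamically wild and algebraically wild. -/
theorem stmt2 {X Y : Type*}
    (Hh : Subgroup (Equiv.Perm X)) (Gh : Subgroup (Equiv.Perm Y))
    (x : X) (y : Y) (U : ℕ → Set X) (V : ℕ → Set Y)
    (hUdec : ∀ n, U (n + 1) ⊆ U n) (hxU : ∀ n, x ∈ U n)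
    (hVdec : ∀ n, V (n + 1) ⊆ V n) (hyV : ∀ n, y ∈ V n)
    -- elements of `Ĥ` preserving `U_{n+1}` setwise also preserve `U_n` setwise
    (hHdesc : ∀ n, ∀ g : Equiv.Perm X, g ∈ Hh →
      g '' U (n + 1) = U (n + 1) → g '' U n = U n)
    -- the setwise stabilizer of `U_n` in `Ĥ` acts transitively on `U_n`
    (hHtrans : ∀ n, ∀ u ∈ U n, ∃ g : Equiv.Perm X, g ∈ Hh ∧ g '' U n = U n ∧ g x = u)
    (hGdesc : ∀ n, ∀ g : Equiv.Perm Y, g ∈ Gh →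
      g '' V (n + 1) = V (n + 1) → g '' V n = V n)
    (hGtrans : ∀ n, ∀ v ∈ V n, ∃ g : Equiv.Perm Y, g ∈ Gh ∧ g '' V n = V n ∧ g y = v)
    -- (i) the action of `Ĥ` is of flat type: `K_n(Ĥ) = Z_n(Ĥ)`
    (hflat : ∀ n, fixSet (Hh : Set (Equiv.Perm X)) (U n)
      = centSet (Hh : Set (Equiv.Perm X)) x (U n))
    -- (ii) the chain `(K_n(Ĥ))` is unbounded
    (hHwild : ∀ n, ∃ m, n < m ∧ fixSet (Hh : Set (Equiv.Perm X)) (U n)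
      ⊂ fixSet (Hh : Set (Equiv.Perm X)) (U m))
    -- (iii) the centralizers of the `Ĝ`-action are trivial
    (hGcent : ∀ n, centSet (Gh : Set (Equiv.Perm Y)) y (V n) = {1})
    -- (iv) the stabilizers of the `Ĝ`-action are nontrivial
    (hGstab : ∀ n, 1 ≤ n → fixSet (Gh : Set (Equiv.Perm Y)) (V n) ≠ {1})
    -- (v) the chain `(K_n(Ĝ))` is unbounded
    (hGwild : ∀ n, ∃ m, n < m ∧ fixSet (Gh : Set (Equiv.Perm Y)) (V n)
      ⊂ fixSet (Gh : Set (Equiv.Perm Y)) (V m)) :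
    (∀ n, ∃ m, n < m ∧ fixSet (prodGrp Hh Gh) (U n ×ˢ V n)
      ⊂ fixSet (prodGrp Hh Gh) (U m ×ˢ V m)) ∧
    (∀ n, ∃ m, n < m ∧ centSet (prodGrp Hh Gh) (x, y) (U n ×ˢ V n)
      ⊂ centSet (prodGrp Hh Gh) (x, y) (U m ×ˢ V m)) ∧
    (∀ n, 1 ≤ n → centSet (prodGrp Hh Gh) (x, y) (U n ×ˢ V n)
      ⊂ fixSet (prodGrp Hh Gh) (U n ×ˢ V n)) :=
  stmt2_general Hh Gh x y U V hxU (antitone_nat_of_succ_le hVdec) hyV hflat hHwild hGcent hGstab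
end

section
/- Let (X'_k)_{k ≥ 1} be finite sets with |X'_k| ≥ 2 for all k, let X̂' = ∏_{k ≥ 1} X'_k with the product topology (each factor discrete), and suppose φ : X̂ → X̂' is a homeomorphism such that for every h ∈ H the conjugate φ ∘ h ∘ φ⁻¹ : X̂' → X̂' is induced by a rooted tree automorphism, i.e., for every k ≥ 1 and all x, y ∈ X̂', if x_i = y_i for all 1 ≤ i ≤ k then (φ∘h∘φ⁻¹)(x)_i = (φ∘h∘φ⁻¹)(y)_i for all 1 ≤ i ≤ k. Then limsup_k |X'_k| = ∞; that is, for every M and every N there exists k > N with |X'_k| > M. -/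
/-!
Let `f` be an automorphism of the rooted tree with boundary `∏ k, X k`. If a power of `f` acts
trivially on level `k`, it permutes the children of each vertex of that level, so its
`card (X k)!`-th power acts trivially on level `k + 1`. Hence `f` to the power
`∏ i < k, card (X i)!` acts trivially on level `k`, and these powers converge pointwise to the
identity. A finite discrete factor of `f` is therefore killed by one of them: every prime dividing
its order is at most some `card (X i)`. The conjugate of `σ₁` has among its factors the permutations
`σ_{1,n}`, whose orders are distinct primes, so the cardinalities `card (X i)` are unbounded.
-/

open Filter

open Function Topology

lemma infinite_setOf_prime_dvd_orderOf {ι : Type*} [Infinite ι] {G : ι → Type*}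
    [∀ n, Monoid (G n)] {g : ∀ n, G n} {p : ι → ℕ} (hinj : Injective p)
    (hprime : ∀ n, (p n).Prime) (hdvd : ∀ n, p n ∣ orderOf (g n)) :
    {q | q.Prime ∧ ∃ n, q ∣ orderOf (g n)}.Infinite :=
  (Set.infinite_range_of_injective hinj).mono <| Set.range_subset_iff.mpr fun n =>
    ⟨hprime n, n, hdvd n⟩

section LevelPreserving

variable {X : ℕ → Type*}

/-- The self-maps of the boundary `∏ k, X k` of a rooted tree that are induced by rooted tree
endomorphisms; the vertices of level `k` are encoded by the first `k` coordinates. When the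
`X k` are finite, those induced by automorphisms are the surjective ones. -/
def IsLevelPreserving (f : (∀ k, X k) → ∀ k, X k) : Prop :=
  ∀ k x y, (∀ i, i < k → x i = y i) → ∀ i, i < k → f x i = f y i

/-- The self-maps of the boundary `∏ k, X k` of a rooted tree that act trivially on level `k`,
encoded as for `IsLevelPreserving`. As `k` grows, such maps get uniformly close to the identity. -/
def FixesLevel (f : (∀ k, X k) → ∀ k, X k) (k : ℕ) : Prop :=
  ∀ x, ∀ i < k, f x i = x i

/-- The map induced by `f` on the children of the vertex `(x 0, …, x (k - 1))` of level `k`, which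
are encoded by `X k`. It is meaningful when `f` is level-preserving and fixes that vertex. -/
def childMap (f : (∀ k, X k) → ∀ k, X k) (k : ℕ) (x : ∀ k, X k) (a : X k) : X k :=
  f (update x k a) k

section Levels

variable {f : (∀ k, X k) → ∀ k, X k} {k : ℕ}

lemma apply_eq_update_apply_of_lt_succ {x y : ∀ k, X k} (h : ∀ i < k, y i = x i) :
    ∀ i < k + 1, y i = update x k (y k) i := by
  intro i hi
  rcases Nat.lt_succ_iff_lt_or_eq.mp hi with hi | rfl
  · rw [update_of_ne hi.ne, h i hi]
  · rw [update_self]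

lemma IsLevelPreserving.iterate (hf : IsLevelPreserving f) (n : ℕ) :
    IsLevelPreserving f^[n] := by
  induction n with
  | zero => exact fun _ _ _ h => h
  | succ _ ih => exact fun k x y h => ih k _ _ (hf k x y h)

lemma FixesLevel.iterate (hfix : FixesLevel f k) (n : ℕ) : FixesLevel f^[n] k := by
  induction n with
  | zero => exact fun _ _ _ => rfl
  | succ _ ih => exact fun x i hi => (ih (f x) i hi).trans (hfix x i hi)

lemma IsLevelPreserving.childMap_apply (hf : IsLevelPreserving f) {x y : ∀ k, X k}
    (h : ∀ i < k, y i = x i) : childMap f k x (y k) = f y k :=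
  (hf (k + 1) _ _ (apply_eq_update_apply_of_lt_succ h) k k.lt_succ_self).symm

lemma IsLevelPreserving.childMap_surjective (hf : IsLevelPreserving f) (hsurj : Surjective f)
    (hfix : FixesLevel f k) (x : ∀ k, X k) : Surjective (childMap f k x) := by
  intro b
  obtain ⟨y, hy⟩ := hsurj (update x k b)
  have y_eq_x : ∀ i < k, y i = x i := fun i hi => by
    rw [← hfix y i hi, hy, update_of_ne hi.ne]
  exact ⟨y k, by rw [hf.childMap_apply y_eq_x, hy, update_self]⟩

lemma IsLevelPreserving.iterate_apply_eq_childMap_iterate (hf : IsLevelPreserving f)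
    (hfix : FixesLevel f k) (x : ∀ k, X k) (n : ℕ) : f^[n] x k = (childMap f k x)^[n] (x k) := by
  induction n with
  | zero => rfl
  | succ n ih =>
    rw [iterate_succ_apply', iterate_succ_apply', ← ih,
      hf.childMap_apply fun i hi => hfix.iterate n x i hi]

lemma FixesLevel.iterate_factorial_card [Fintype (X k)] (hfix : FixesLevel f k)
    (hf : IsLevelPreserving f) (hsurj : Surjective f) :
    FixesLevel f^[(Fintype.card (X k)).factorial] (k + 1) := by
  intro x i hi
  rcases Nat.lt_succ_iff_lt_or_eq.mp hi with hi | rfl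
  · exact hfix.iterate _ x i hi
  · have childMap_inj : Injective (childMap f i x) :=
      Finite.injective_iff_surjective.mpr (hf.childMap_surjective hsurj hfix x)
    rw [hf.iterate_apply_eq_childMap_iterate hfix,
      injective_iff_iterate_factorial_card_eq_id.mp childMap_inj, id]

variable [∀ k, Fintype (X k)]

lemma IsLevelPreserving.fixesLevel_iterate_prod_factorial_card (hf : IsLevelPreserving f)
    (hsurj : Surjective f) (k : ℕ) :
    FixesLevel f^[∏ i ∈ Finset.range k, (Fintype.card (X i)).factorial] k := by
  induction k with
  | zero => exact fun _ i hi => absurd hi i.not_lt_zero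
  | succ k ih =>
    rw [Finset.prod_range_succ, iterate_mul]
    exact ih.iterate_factorial_card (hf.iterate _) (hsurj.iterate _)

variable [∀ k, TopologicalSpace (X k)]

lemma IsLevelPreserving.tendsto_iterate_prod_factorial_card (hf : IsLevelPreserving f)
    (hsurj : Surjective f) (x : ∀ k, X k) :
    Tendsto (fun k => f^[∏ i ∈ Finset.range k, (Fintype.card (X i)).factorial] x) atTop (𝓝 x) := by
  refine tendsto_pi_nhds.mpr fun i => tendsto_const_nhds.congr' ?_
  filter_upwards [eventually_gt_atTop i] with k hk
  exact (hf.fixesLevel_iterate_prod_factorial_card hsurj k x i hk).symm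

variable {A : Type*} [TopologicalSpace A] [DiscreteTopology A] {ψ : (∀ k, X k) → A}
  {τ : Equiv.Perm A}

lemma IsLevelPreserving.exists_orderOf_dvd_prod_factorial_card (hf : IsLevelPreserving f)
    (hsurj : Surjective f) (hψ : Continuous ψ) (hψsurj : Surjective ψ) (hτ : Semiconj ψ f τ) :
    ∃ k, orderOf τ ∣ ∏ i ∈ Finset.range k, (Fintype.card (X i)).factorial := by
  have : CompactSpace A := hψsurj.compactSpace hψ
  have : Finite A := finite_of_compact_of_discrete
  have eventually_fixes (a : A) :
      ∀ᶠ k in atTop, (τ ^ ∏ i ∈ Finset.range k, (Fintype.card (X i)).factorial) a = a := by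
    obtain ⟨x, rfl⟩ := hψsurj a
    have tendsto_ψ := (hψ.tendsto x).comp (hf.tendsto_iterate_prod_factorial_card hsurj x)
    rw [nhds_discrete, tendsto_pure] at tendsto_ψ
    filter_upwards [tendsto_ψ] with k hk
    rwa [comp_apply, (hτ.iterate_right _).eq, Equiv.Perm.iterate_eq_pow] at hk
  obtain ⟨k, hk⟩ := (eventually_all.mpr eventually_fixes).exists
  exact ⟨k, orderOf_dvd_of_pow_eq_one (Equiv.ext hk)⟩

lemma IsLevelPreserving.exists_le_card_of_prime_dvd_orderOf (hf : IsLevelPreserving f)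
    (hsurj : Surjective f) (hψ : Continuous ψ) (hψsurj : Surjective ψ) (hτ : Semiconj ψ f τ)
    {q : ℕ} (hq : q.Prime) (hqτ : q ∣ orderOf τ) : ∃ i, q ≤ Fintype.card (X i) := by
  obtain ⟨k, hk⟩ := hf.exists_orderOf_dvd_prod_factorial_card hsurj hψ hψsurj hτ
  obtain ⟨i, -, hi⟩ := hq.prime.exists_mem_finset_dvd (hqτ.trans hk)
  exact ⟨i, hq.dvd_factorial.mp hi⟩

end Levels

theorem stmt5_general [∀ k, Fintype (X k)] [∀ k, Nonempty (X k)] [∀ k, TopologicalSpace (X k)]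
    {ι : Type*} {A : ι → Type*} [∀ n, TopologicalSpace (A n)] [∀ n, DiscreteTopology (A n)]
    (τ : ∀ n, Equiv.Perm (A n)) (hτ : {q | q.Prime ∧ ∃ n, q ∣ orderOf (τ n)}.Infinite)
    (φ : (∀ n, A n) ≃ₜ ∀ k, X k)
    (hlevel : IsLevelPreserving fun x => φ (Pi.map (fun n => τ n) (φ.symm x))) (M N : ℕ) :
    ∃ k, N < k ∧ M < Fintype.card (X k) := by
  by_contra! card_le
  have bddAbove_card : BddAbove (Set.range fun k => Fintype.card (X k)) :=
    (isBoundedUnder_of_eventually_le ((eventually_gt_atTop N).mono card_le)).bddAbove_range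
  obtain ⟨B, hB⟩ := bddAbove_card
  have surj : Surjective fun x => φ (Pi.map (fun n => τ n) (φ.symm x)) :=
    φ.surjective.comp ((Surjective.piMap fun n => (τ n).surjective).comp φ.symm.surjective)
  have (n : ι) : Nonempty (A n) := ⟨φ.symm (Classical.arbitrary _) n⟩
  refine hτ (BddAbove.finite ⟨B, ?_⟩)
  rintro q ⟨hq, n, hqn⟩
  obtain ⟨i, hi⟩ := hlevel.exists_le_card_of_prime_dvd_orderOf (ψ := fun x => φ.symm x n) surj
    ((continuous_apply n).comp φ.symm.continuous)
    ((surjective_eval n).comp φ.symm.surjective)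
    (fun x => by simp only [Homeomorph.symm_apply_apply, Pi.map_apply]) hq hqn
  exact hi.trans (hB ⟨i, rfl⟩)

end LevelPreserving

/-- If `φ : X̂ → X̂'` is a homeomorphism onto the boundary `X̂' = ∏_k X'_k` of another
spherically homogeneous rooted tree (all `X'_k` finite with at least `2` elements)
which conjugates every `h ∈ H = ⟨σ₁, σ₂⟩` to a map induced by a rooted tree
automorphism of `X̂'` (i.e. preserving agreement of the first `k` coordinates for
every `k`), then `limsup_k |X'_k| = ∞`: for all `M` and `N` there is `k > N` with
`|X'_k| > M`. -/
theorem stmt5 (o : ℕ → ℕ) (p : Fin 2 × ℕ → ℕ)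
    (hpinj : Function.Injective p)
    (hpodd : ∀ q, Odd (p q)) (hpprime : ∀ q, Nat.Prime (p q))
    (hple : ∀ (i : Fin 2) (n : ℕ), p (i, n) ≤ o n)
    (hsum : ∀ n : ℕ, o n < p (0, n) + p (1, n))
    (σ : Fin 2 → GB o)
    (horder : ∀ (i : Fin 2) (n : ℕ), orderOf (σ i n) = p (i, n))
    (hgen : ∀ n : ℕ,
      Subgroup.closure {(σ 0 n : Equiv.Perm (Fin (o n))), (σ 1 n : Equiv.Perm (Fin (o n)))}
        = alternatingGroup (Fin (o n)))
    (X' : ℕ → Type) [∀ k, Fintype (X' k)]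
    [∀ k, TopologicalSpace (X' k)] [∀ k, DiscreteTopology (X' k)]
    (hcard : ∀ k, 2 ≤ Fintype.card (X' k))
    (φ : XB o ≃ₜ (∀ k, X' k))
    (hlevel : ∀ h ∈ (Subgroup.closure {σ 0, σ 1} : Subgroup (GB o)),
      ∀ k : ℕ, ∀ x y : (∀ k, X' k), (∀ i, i < k → x i = y i) →
        ∀ i, i < k → φ (smulX o h (φ.symm x)) i = φ (smulX o h (φ.symm y)) i) :
    ∀ M N : ℕ, ∃ k, N < k ∧ M < Fintype.card (X' k) := by
  have (k : ℕ) : Nonempty (X' k) := Fintype.card_pos_iff.mp (two_pos.trans_le (hcard k))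
  have p_dvd_orderOf (n : ℕ) : p (0, n) ∣ orderOf (σ 0 n : Equiv.Perm (Fin (o n))) := by
    rw [Subgroup.orderOf_coe, horder]
  exact stmt5_general _ (infinite_setOf_prime_dvd_orderOf
    (hpinj.comp (Prod.mk_right_injective 0)) (fun n => hpprime (0, n)) p_dvd_orderOf)
    φ (hlevel (σ 0) (Subgroup.subset_closure (.inl rfl)))
end

section
/- For every n ≥ 1, the image of the group H under the projection homomorphism Ĝ = ∏_{i ≥ 1} Alt(o(i)) → ∏_{i=1}^{n} Alt(o(i)) onto the first n coordinates is the entire finite group ∏_{i=1}^{n} Alt(o(i)). -/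
open Filter

/-- The projection of `Ĝ = ∏_{i} Alt (o i)` onto its first `n` coordinates. -/
def projGB (o : ℕ → ℕ) (n : ℕ) : GB o →* ∀ i : Fin n, alternatingGroup (Fin (o i.1)) where
  toFun g := fun i => g i.1
  map_one' := rfl
  map_mul' _ _ := rfl

/-!
If the orders of the coordinates of `s` are pairwise coprime, then raising `s` to the product of
the orders of all coordinates but the `i`-th kills those coordinates and leaves the cyclic group
generated by the `i`-th one unchanged. A group generated by such elements therefore contains each
generator's coordinates separately, and hence every factor onto which it projects surjectively.
-/

theorem closure_eq_top_iff_closure_image_coe_eq {G : Type*} [Group G] {K : Subgroup G}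
    {S : Set K} :
    Subgroup.closure S = ⊤ ↔ Subgroup.closure ((↑) '' S : Set G) = K := by
  rw [← Subgroup.map_subtype_inj, MonoidHom.map_closure, ← MonoidHom.range_eq_map,
    Subgroup.range_subtype, Subgroup.coe_subtype]

theorem pairwise_coprime_orderOf_of_prime_of_injective {ι : Type*} {G : ι → Type*}
    [∀ i, Monoid (G i)] {s : ∀ i, G i} (hprime : ∀ i, (orderOf (s i)).Prime)
    (hinj : Function.Injective fun i => orderOf (s i)) :
    Pairwise fun i j => Nat.Coprime (orderOf (s i)) (orderOf (s j)) :=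
  fun i j hij => (Nat.coprime_primes (hprime i) (hprime j)).2 (hinj.ne hij)

section Pi

variable {ι : Type*} {G : ι → Type*}

-- `orderOf` is `0` at an element of infinite order, and `0` is coprime only to `1`: if `s i` has
-- infinite order, then all other coordinates are trivial, and if another coordinate has infinite
-- order, then `s i` is trivial.
theorem exists_pow_eq_mulSingle [Finite ι] [DecidableEq ι] [∀ i, Monoid (G i)]
    (s : ∀ i, G i) (i : ι)
    (hcop : ∀ j ≠ i, Nat.Coprime (orderOf (s j)) (orderOf (s i))) :
    ∃ k : ℕ, s ^ k = Pi.mulSingle i (s i) := by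
  have := Fintype.ofFinite ι
  let N := ∏ j ∈ Finset.univ.erase i, orderOf (s j)
  have hN : Nat.Coprime N (orderOf (s i)) :=
    Nat.Coprime.prod_left fun j hj => hcop j (Finset.ne_of_mem_erase hj)
  have hkill (j : ι) (hj : j ≠ i) : s j ^ N = 1 :=
    orderOf_dvd_iff_pow_eq_one.1 <|
      Finset.dvd_prod_of_mem _ (Finset.mem_erase.2 ⟨hj, Finset.mem_univ j⟩)
  obtain ⟨m, hm⟩ := exists_pow_eq_self_of_coprime hN
  refine ⟨N * m, funext fun j => ?_⟩
  rw [Pi.pow_apply, pow_mul]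
  obtain rfl | hj := eq_or_ne j i
  · rw [hm, Pi.mulSingle_eq_same]
  · rw [hkill j hj, one_pow, Pi.mulSingle_eq_of_ne hj]

variable [∀ i, Group (G i)]

theorem map_mulSingle_closure_image_eval_le_closure [Finite ι] [DecidableEq ι]
    {S : Set (∀ i, G i)} (i : ι)
    (hcop : ∀ s ∈ S, ∀ j ≠ i, Nat.Coprime (orderOf (s j)) (orderOf (s i))) :
    (Subgroup.closure (Function.eval i '' S)).map (MonoidHom.mulSingle G i) ≤
      Subgroup.closure S := by
  rw [MonoidHom.map_closure, Subgroup.closure_le]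
  rintro _ ⟨_, ⟨s, hs, rfl⟩, rfl⟩
  obtain ⟨k, hk⟩ := exists_pow_eq_mulSingle s i (hcop s hs)
  have hpow : s ^ k ∈ Subgroup.closure S := pow_mem (Subgroup.subset_closure hs) k
  rwa [hk] at hpow

theorem closure_eq_top_of_pairwise_coprime_orderOf [Finite ι] {S : Set (∀ i, G i)}
    (hcop : ∀ s ∈ S, Pairwise fun i j => Nat.Coprime (orderOf (s i)) (orderOf (s j)))
    (hgen : ∀ i, Subgroup.closure (Function.eval i '' S) = ⊤) :
    Subgroup.closure S = ⊤ := by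
  classical
  refine (Subgroup.eq_top_iff' _).2 fun x => Subgroup.pi_mem_of_mulSingle_mem x fun i => ?_
  refine map_mulSingle_closure_image_eval_le_closure i (fun s hs j hj => hcop s hs hj) ?_
  rw [hgen]
  exact Subgroup.mem_map_of_mem (MonoidHom.mulSingle G i) (Subgroup.mem_top (x i))

theorem stmt6_general {κ : Type*} [Finite κ] {f : κ → ι} (hf : Function.Injective f)
    {S : Set (∀ i, G i)}
    (hcop : ∀ s ∈ S, Pairwise fun i j => Nat.Coprime (orderOf (s i)) (orderOf (s j)))
    (hgen : ∀ i, Subgroup.closure (Function.eval i '' S) = ⊤) :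
    (Subgroup.closure S).map (MonoidHom.pi fun k => Pi.evalMonoidHom G (f k)) = ⊤ := by
  rw [MonoidHom.map_closure]
  refine closure_eq_top_of_pairwise_coprime_orderOf ?_ fun k => ?_
  · rintro _ ⟨s, hs, rfl⟩
    exact (hcop s hs).comp_of_injective hf
  · rw [Set.image_image]
    exact hgen (f k)

end Pi

/-- For every `n`, the image of `H = ⟨σ₁, σ₂⟩` under the projection of
`Ĝ = ∏_i Alt (o i)` onto the first `n` coordinates is the whole finite group
`∏_{i < n} Alt (o i)`. -/
theorem stmt6 (o : ℕ → ℕ) (p : Fin 2 × ℕ → ℕ)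
    (hpinj : Function.Injective p)
    (hpodd : ∀ q, Odd (p q)) (hpprime : ∀ q, Nat.Prime (p q))
    (hple : ∀ (i : Fin 2) (n : ℕ), p (i, n) ≤ o n)
    (hsum : ∀ n : ℕ, o n < p (0, n) + p (1, n))
    (σ : Fin 2 → GB o)
    (horder : ∀ (i : Fin 2) (n : ℕ), orderOf (σ i n) = p (i, n))
    (hgen : ∀ n : ℕ,
      Subgroup.closure {(σ 0 n : Equiv.Perm (Fin (o n))), (σ 1 n : Equiv.Perm (Fin (o n)))}
        = alternatingGroup (Fin (o n)))
    (n : ℕ) :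
    Subgroup.map (projGB o n) (Subgroup.closure {σ 0, σ 1}) = ⊤ := by
  have hcop (a : Fin 2) := pairwise_coprime_orderOf_of_prime_of_injective (s := σ a)
    (by simp only [horder, hpprime, implies_true])
    (by simpa only [horder, Function.comp_def] using hpinj.comp (Prod.mk_right_injective a))
  exact stmt6_general Fin.val_injective (by simp [hcop]) fun i =>
    closure_eq_top_iff_closure_image_coe_eq.2 (by simpa only [Set.image_pair] using hgen i)
end

section
/- Every H-orbit in X̂ = ∏_{n ≥ 1} Fin(o(n)) is dense in the product topology; that is, the coordinatewise action of the 2-generated group H on the Cantor set X̂ is minimal. -/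
open Filter

/-!
If the coordinates of an element `s` of a finite product of groups have pairwise coprime orders,
then by the Chinese remainder theorem some power of `s` equals `s i` at one coordinate `i` and is
trivial at all others. Hence a subgroup generated by such elements is the full product of its
coordinate projections. In an infinite product the same holds after restriction to finitely many
coordinates, and these are all that a basic open set of the product topology sees.
-/

theorem closure_eq_top_of_closure_coe_image {G : Type*} [Group G] {K : Subgroup G} {T : Set K}
    (hT : Subgroup.closure ((↑) '' T : Set G) = K) : Subgroup.closure T = ⊤ := by
  apply Subgroup.map_injective K.subtype_injective
  rw [MonoidHom.map_closure, ← MonoidHom.range_eq_map, K.range_subtype]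
  exact hT

theorem isPretransitive_closure_of_closure_coe_image {G α : Type*} [Group G] [MulAction G α]
    {K : Subgroup G} [MulAction.IsPretransitive K α] {T : Set K}
    (hT : Subgroup.closure ((↑) '' T : Set G) = K) :
    MulAction.IsPretransitive (Subgroup.closure T) α where
  exists_smul_eq a b :=
    let ⟨g, hg⟩ := MulAction.exists_smul_eq K a b
    ⟨⟨g, closure_eq_top_of_closure_coe_image hT ▸ Subgroup.mem_top g⟩, hg⟩

theorem isPretransitive_closure_pair_of_eq_alternatingGroup {α : Type*} [Fintype α]
    [DecidableEq α] (hα : 3 ≤ Nat.card α) {g h : alternatingGroup α}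
    (hgh : Subgroup.closure {(g : Equiv.Perm α), (h : Equiv.Perm α)} = alternatingGroup α) :
    MulAction.IsPretransitive (Subgroup.closure {g, h}) α := by
  have := alternatingGroup.isPretransitive_of_three_le_card α hα
  exact isPretransitive_closure_of_closure_coe_image (by rwa [Set.image_pair])

theorem pairwise_coprime_orderOf_of_injective_of_prime {ι : Type*} {G : ι → Type*}
    [∀ i, Monoid (G i)] {p : ι → ℕ} (hp : Function.Injective p) (hprime : ∀ i, (p i).Prime)
    {s : ∀ i, G i} (hs : ∀ i, orderOf (s i) = p i) :
    Pairwise fun i j => (orderOf (s i)).Coprime (orderOf (s j)) := by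
  intro i j hij
  rw [hs, hs, Nat.coprime_primes (hprime i) (hprime j)]
  exact hp.ne hij

theorem setOf_smulX_eq_orbit {o : ℕ → ℕ} (H : Subgroup (GB o)) (x : XB o) :
    {y : XB o | ∃ h ∈ H, smulX o h x = y} = MulAction.orbit H x :=
  Set.ext fun _ => ⟨fun ⟨h, hh, e⟩ => ⟨⟨h, hh⟩, e⟩, fun ⟨⟨h, hh⟩, e⟩ => ⟨h, hh, e⟩⟩

section Product

variable {ι : Type*} {G : ι → Type*} [∀ i, Group (G i)]

theorem mulSingle_mem_zpowers_of_pairwise_coprime_orderOf [Finite ι] [DecidableEq ι]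
    {s : ∀ i, G i} (hs : Pairwise fun i j => (orderOf (s i)).Coprime (orderOf (s j))) (i : ι) :
    Pi.mulSingle i (s i) ∈ Subgroup.zpowers s := by
  cases nonempty_fintype ι
  have hcoprime : (orderOf (s i)).Coprime (∏ j ∈ Finset.univ.erase i, orderOf (s j)) :=
    Nat.Coprime.prod_right fun j hj => hs (Finset.ne_of_mem_erase hj).symm
  obtain ⟨e, he_one, he_zero⟩ := Nat.chineseRemainder hcoprime 1 0
  suffices s ^ e = Pi.mulSingle i (s i) from this ▸ Subgroup.npow_mem_zpowers s e
  funext j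
  obtain rfl | hji := eq_or_ne j i
  · simpa using pow_eq_pow_iff_modEq.2 he_one
  · have hdvd : orderOf (s j) ∣ e :=
      (Finset.dvd_prod_of_mem _ (Finset.mem_erase.2 ⟨hji, Finset.mem_univ j⟩)).trans
        (Nat.modEq_zero_iff_dvd.1 he_zero)
    rw [Pi.pow_apply, Pi.mulSingle_eq_of_ne hji, orderOf_dvd_iff_pow_eq_one.1 hdvd]

theorem closure_eq_pi_of_pairwise_coprime_orderOf [Finite ι] {S : Set (∀ i, G i)}
    (hS : ∀ s ∈ S, Pairwise fun i j => (orderOf (s i)).Coprime (orderOf (s j))) :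
    Subgroup.closure S =
      Subgroup.pi Set.univ fun i => Subgroup.closure (Function.eval i '' S) := by
  classical
  refine le_antisymm ((Subgroup.closure_le _).2 fun s hs i _ =>
    Subgroup.subset_closure (Set.mem_image_of_mem _ hs)) (Subgroup.pi_le_iff.2 fun i => ?_)
  rw [MonoidHom.map_closure, Subgroup.closure_le]
  rintro _ ⟨_, ⟨s, hs, rfl⟩, rfl⟩
  exact Subgroup.zpowers_le_of_mem (Subgroup.subset_closure hs)
    (mulSingle_mem_zpowers_of_pairwise_coprime_orderOf (hS s hs) i)

theorem exists_mem_closure_eq_on_finset {S : Set (∀ i, G i)}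
    (hS : ∀ s ∈ S, Pairwise fun i j => (orderOf (s i)).Coprime (orderOf (s j)))
    (I : Finset ι) {g : ∀ i, G i} (hg : ∀ i ∈ I, g i ∈ Subgroup.closure (Function.eval i '' S)) :
    ∃ h ∈ Subgroup.closure S, ∀ i ∈ I, h i = g i := by
  let restrict : (∀ i, G i) →* ∀ i : I, G i := MonoidHom.pi fun i => Pi.evalMonoidHom G i
  have hcoprime : ∀ s ∈ restrict '' S,
      Pairwise fun i j => (orderOf (s i)).Coprime (orderOf (s j)) := by
    rintro _ ⟨s, hs, rfl⟩
    exact (hS s hs).comp_of_injective Subtype.val_injective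
  have hmem : restrict g ∈ (Subgroup.closure S).map restrict := by
    rw [MonoidHom.map_closure, closure_eq_pi_of_pairwise_coprime_orderOf hcoprime]
    refine (Subgroup.mem_pi _).2 fun i _ => ?_
    rw [← Set.image_comp]
    exact hg i i.2
  obtain ⟨h, hh, heq⟩ := hmem
  exact ⟨h, hh, fun i hi => congrFun heq ⟨i, hi⟩⟩

theorem stmt7_general {X : ι → Type*} [∀ i, TopologicalSpace (X i)] [∀ i, MulAction (G i) (X i)]
    {S : Set (∀ i, G i)}
    (hS : ∀ s ∈ S, Pairwise fun i j => (orderOf (s i)).Coprime (orderOf (s j)))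
    (hmin : ∀ i, MulAction.IsMinimal (Subgroup.closure (Function.eval i '' S)) (X i)) :
    MulAction.IsMinimal (Subgroup.closure S) (∀ i, X i) := by
  refine ⟨fun x => dense_iff_inter_open.2 fun U hU ⟨y, hy⟩ => ?_⟩
  obtain ⟨I, u, hu, huU⟩ := isOpen_pi_iff.1 hU y hy
  have hmove (i : ι) :
      ∃ g ∈ Subgroup.closure (Function.eval i '' S), i ∈ I → g • x i ∈ u i := by
    by_cases hi : i ∈ I
    · obtain ⟨g, hg⟩ := (hu i hi).1.exists_smul_mem
        (Subgroup.closure (Function.eval i '' S)) (x i) ⟨y i, (hu i hi).2⟩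
      exact ⟨g, g.2, fun _ => hg⟩
    · exact ⟨1, one_mem _, fun h => absurd h hi⟩
  choose g hg hgu using hmove
  obtain ⟨h, hh, heq⟩ := exists_mem_closure_eq_on_finset hS I fun i _ => hg i
  refine ⟨h • x, huU fun i hi => ?_, ⟨h, hh⟩, rfl⟩
  rw [Pi.smul_apply', heq i hi]
  exact hgu i hi

end Product

/-- Every orbit of the subgroup `H = ⟨σ₁, σ₂⟩` acting coordinatewise on the Cantor set
`X̂ = ∏_n Fin (o n)` is dense in the product topology: the action of the
`2`-generated group `H` on `X̂` is minimal. -/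
theorem stmt7 (o : ℕ → ℕ) (p : Fin 2 × ℕ → ℕ)
    (hpinj : Function.Injective p)
    (hpodd : ∀ q, Odd (p q)) (hpprime : ∀ q, Nat.Prime (p q))
    (hple : ∀ (i : Fin 2) (n : ℕ), p (i, n) ≤ o n)
    (hsum : ∀ n : ℕ, o n < p (0, n) + p (1, n))
    (σ : Fin 2 → GB o)
    (horder : ∀ (i : Fin 2) (n : ℕ), orderOf (σ i n) = p (i, n))
    (hgen : ∀ n : ℕ,
      Subgroup.closure {(σ 0 n : Equiv.Perm (Fin (o n))), (σ 1 n : Equiv.Perm (Fin (o n)))}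
        = alternatingGroup (Fin (o n)))
    (x : XB o) :
    Dense {y : XB o | ∃ h ∈ (Subgroup.closure {σ 0, σ 1} : Subgroup (GB o)),
      smulX o h x = y} := by
  have hcoprime (i : Fin 2) : Pairwise fun m n => (orderOf (σ i m)).Coprime (orderOf (σ i n)) :=
    pairwise_coprime_orderOf_of_injective_of_prime (hpinj.comp (Prod.mk_right_injective i))
      (fun _ => hpprime _) (horder i)
  have htrans (n : ℕ) : MulAction.IsPretransitive (Subgroup.closure {σ 0 n, σ 1 n}) (Fin (o n)) :=
    isPretransitive_closure_pair_of_eq_alternatingGroup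
      (by simpa using ((hpprime (0, n)).odd_iff.1 (hpodd _)).trans (hple 0 n)) (hgen n)
  rw [setOf_smulX_eq_orbit]
  exact (stmt7_general (by rintro s (rfl | rfl) <;> exact hcoprime _)
    fun n => by rw [Set.image_pair]; exact MulAction.isMinimal_of_pretransitive _).dense_orbit x
end

section
/- The subgroup H is dense in Ĝ = ∏_{n ≥ 1} Alt(o(n)) with respect to the product topology in which each finite factor Alt(o(n)) carries the discrete topology. -/
open Filter

/-! Taking `k ≡ 1` modulo the order of `g m` and `k ≡ 0` modulo the orders of the other coordinates
turns a power `g ^ k` of a tuple with pairwise coprime orders into the tuple supported at `m` with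
value `g m`. Hence a subgroup of a finite product generated by such tuples splits as the product of
its coordinate subgroups. In an infinite product, density is tested on finitely many coordinates. -/

section Group

variable {ι : Type*} {G : ι → Type*} [∀ i, Group (G i)]

lemma mulSingle_mem_zpowers_of_coprime_orderOf [Finite ι] [DecidableEq ι] {g : ∀ i, G i} {m : ι}
    (hg : ∀ j ≠ m, (orderOf (g m)).Coprime (orderOf (g j))) :
    Pi.mulSingle m (g m) ∈ Subgroup.zpowers g := by
  cases nonempty_fintype ι
  have hcop : (orderOf (g m)).Coprime (∏ j ∈ Finset.univ.erase m, orderOf (g j)) :=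
    Nat.Coprime.prod_right fun j hj => hg j (Finset.ne_of_mem_erase hj)
  obtain ⟨k, hk_one, hk_zero⟩ := Nat.chineseRemainder hcop 1 0
  suffices g ^ k = Pi.mulSingle m (g m) from this ▸ Subgroup.npow_mem_zpowers g k
  funext j
  obtain rfl | hj := eq_or_ne j m
  · rw [Pi.pow_apply, Pi.mulSingle_eq_same, pow_eq_pow_iff_modEq.2 hk_one, pow_one]
  · rw [Pi.pow_apply, Pi.mulSingle_eq_of_ne hj, ← orderOf_dvd_iff_pow_eq_one]
    have hj_mem : j ∈ Finset.univ.erase m := Finset.mem_erase.2 ⟨hj, Finset.mem_univ j⟩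
    exact (Finset.dvd_prod_of_mem (fun j => orderOf (g j)) hj_mem).trans
      (Nat.modEq_zero_iff_dvd.1 hk_zero)

lemma subgroup_closure_eq_pi_of_pairwise_coprime_orderOf [Finite ι] {s : Set (∀ i, G i)}
    (hs : ∀ g ∈ s, Pairwise fun i j => (orderOf (g i)).Coprime (orderOf (g j))) :
    Subgroup.closure s =
      Subgroup.pi Set.univ fun i => Subgroup.closure (Function.eval i '' s) := by
  classical
  refine le_antisymm ?_ ?_
  · rw [Subgroup.closure_le]
    exact fun g hg i _ => Subgroup.subset_closure (Set.mem_image_of_mem _ hg)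
  · rw [Subgroup.pi_le_iff]
    intro i
    rw [Subgroup.map_le_iff_le_comap, Subgroup.closure_le]
    rintro _ ⟨g, hg, rfl⟩
    have hzpowers : Subgroup.zpowers g ≤ Subgroup.closure s :=
      Subgroup.zpowers_le.2 (Subgroup.subset_closure hg)
    exact hzpowers (mulSingle_mem_zpowers_of_coprime_orderOf fun j hj => hs g hg hj.symm)

lemma image_restrict_subgroup_closure (s : Set (∀ i, G i)) (F : Finset ι) :
    F.restrict '' (Subgroup.closure s : Set (∀ i, G i)) =
      (Subgroup.closure (F.restrict '' s) : Set (∀ i : F, G i)) :=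
  congrArg SetLike.coe
    (MonoidHom.map_closure (MonoidHom.pi fun i : F => Pi.evalMonoidHom G (i : ι)) s)

end Group

lemma pairwise_coprime_of_injective_of_prime {ι : Type*} {p : ι → ℕ}
    (hinj : Function.Injective p) (hprime : ∀ i, (p i).Prime) :
    Pairwise fun i j => (p i).Coprime (p j) :=
  fun i j hij => (Nat.coprime_primes (hprime i) (hprime j)).2 (hinj.ne hij)

lemma subgroup_closure_eq_top_of_closure_image_val {G : Type*} [Group G] {H : Subgroup G}
    {s : Set H} (hs : Subgroup.closure (Subtype.val '' s) = H) : Subgroup.closure s = ⊤ := by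
  apply Subgroup.map_injective H.subtype_injective
  rw [MonoidHom.map_closure, ← MonoidHom.range_eq_map, Subgroup.range_subtype]
  exact hs

lemma dense_of_forall_dense_image_restrict {ι : Type*} {X : ι → Type*}
    [∀ i, TopologicalSpace (X i)] {S : Set (∀ i, X i)}
    (hS : ∀ F : Finset ι, Dense (F.restrict '' S)) : Dense S := by
  rw [dense_iff_inter_open]
  rintro U hU ⟨x, hx⟩
  obtain ⟨F, u, hu, hFU⟩ := isOpen_pi_iff.1 hU x hx
  have hopen : IsOpen (Set.univ.pi fun i : F => u i) :=
    isOpen_set_pi Set.finite_univ fun i _ => (hu i i.2).1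
  obtain ⟨_, ⟨y, hyS, rfl⟩, hyu⟩ :=
    (hS F).exists_mem_open hopen ⟨F.restrict x, fun i _ => (hu i i.2).2⟩
  exact ⟨y, hFU fun i hi => hyu ⟨i, hi⟩ trivial, hyS⟩

/-- Where `g i` has infinite order, `orderOf (g i) = 0` and `hcop` makes all other coordinates of
`g` trivial. -/
theorem stmt8_general {ι : Type*} {G : ι → Type*} [∀ i, Group (G i)]
    [∀ i, TopologicalSpace (G i)] {s : Set (∀ i, G i)}
    (hcop : ∀ g ∈ s, Pairwise fun i j => (orderOf (g i)).Coprime (orderOf (g j)))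
    (hdense : ∀ i, Dense (Subgroup.closure (Function.eval i '' s) : Set (G i))) :
    Dense (Subgroup.closure s : Set (∀ i, G i)) := by
  refine dense_of_forall_dense_image_restrict fun F => ?_
  have hcopF : ∀ g ∈ F.restrict '' s,
      Pairwise fun i j => (orderOf (g i)).Coprime (orderOf (g j)) := by
    rintro _ ⟨g, hg, rfl⟩ i j hij
    exact hcop g hg (Subtype.coe_ne_coe.2 hij)
  rw [image_restrict_subgroup_closure, subgroup_closure_eq_pi_of_pairwise_coprime_orderOf hcopF,
    Subgroup.coe_pi]
  refine dense_pi Set.univ fun i _ => ?_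
  rw [Set.image_image]
  exact hdense i

/-- The subgroup `H = ⟨σ₁, σ₂⟩` of `Ĝ = ∏_{n} Alt (o n)`, where the `σ_i` are built
from an injective family `p` of odd primes with `p (i, n) ≤ o n < p (0, n) + p (1, n)`,
the coordinate `σ_i n` has order `p (i, n)`, and `σ₁ n, σ₂ n` generate `Alt (o n)`,
is dense in `Ĝ` for the product topology (each factor discrete). -/
theorem stmt8 (o : ℕ → ℕ) (p : Fin 2 × ℕ → ℕ)
    (hpinj : Function.Injective p)
    (hpodd : ∀ q, Odd (p q)) (hpprime : ∀ q, Nat.Prime (p q))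
    (hple : ∀ (i : Fin 2) (n : ℕ), p (i, n) ≤ o n)
    (hsum : ∀ n : ℕ, o n < p (0, n) + p (1, n))
    (σ : Fin 2 → GB o)
    (horder : ∀ (i : Fin 2) (n : ℕ), orderOf (σ i n) = p (i, n))
    (hgen : ∀ n : ℕ,
      Subgroup.closure {(σ 0 n : Equiv.Perm (Fin (o n))), (σ 1 n : Equiv.Perm (Fin (o n)))}
        = alternatingGroup (Fin (o n))) :
    Dense ((Subgroup.closure {σ 0, σ 1} : Subgroup (GB o)) : Set (GB o)) := by
  have hcop (i : Fin 2) : Pairwise fun m n => (orderOf (σ i m)).Coprime (orderOf (σ i n)) := by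
    simpa only [horder, Function.comp_apply] using pairwise_coprime_of_injective_of_prime
      (hpinj.comp (Prod.mk_right_injective i)) fun n => hpprime (i, n)
  have htop (n : ℕ) : Subgroup.closure {σ 0 n, σ 1 n} = ⊤ :=
    subgroup_closure_eq_top_of_closure_image_val (by rw [Set.image_pair, hgen])
  refine stmt8_general (by rintro _ (rfl | rfl) <;> apply hcop) fun n => ?_
  simpa only [Set.image_pair, Function.eval, htop, Subgroup.coe_top] using dense_univ
end

section
/- Let α be a finite type with at least 5 elements, let x ∈ α, and let g be an element of the alternating group Alt(α) such that g ≠ 1 and g(x) = x. Then there exists τ ∈ Alt(α) with τ(x) = x and g ∘ τ ≠ τ ∘ g. -/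
/-!
A permutation commuting with `g` and fixing `a` also fixes `g a`. A non-identity `g` has a moved
point `a` whose image is not `x`, so any three-cycle that fixes `a` and `x` but moves `g a` fails
to commute with `g`; five points leave room for such a cycle.
-/

theorem exists_apply_ne_and_apply_ne_of_ne_one {α : Type*} {g : Equiv.Perm α} (hg : g ≠ 1)
    (x : α) : ∃ a, g a ≠ a ∧ g a ≠ x := by
  by_cases hgx : g x = x
  · obtain ⟨a, ha⟩ : ∃ a, g a ≠ a := not_forall.mp fun h => hg (Equiv.ext h)
    refine ⟨a, ha, fun hax => ha ?_⟩
    have hax' : a = x := g.injective (hax.trans hgx.symm)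
    rw [hax', hgx]
  · exact ⟨x, hgx, hgx⟩

theorem apply_apply_eq_of_commute {α : Type*} {g τ : Equiv.Perm α} (h : Commute g τ) {a : α}
    (ha : τ a = a) : τ (g a) = g a := by
  rw [← Equiv.Perm.mul_apply, ← h.eq, Equiv.Perm.mul_apply, ha]

section ThreeCycle

variable {α : Type*} [Fintype α] [DecidableEq α]

theorem exists_isThreeCycle_fixing_and_apply_ne {s : Finset α} {b : α} (hb : b ∉ s)
    (hs : s.card + 3 ≤ Fintype.card α) :
    ∃ τ : Equiv.Perm α, τ.IsThreeCycle ∧ (∀ y ∈ s, τ y = y) ∧ τ b ≠ b := by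
  have two_left : 1 < (insert b s)ᶜ.card := by
    rw [Finset.card_compl, Finset.card_insert_of_notMem hb]
    omega
  obtain ⟨c, hc, d, hd, hcd⟩ := Finset.one_lt_card.mp two_left
  simp only [Finset.mem_compl, Finset.mem_insert, not_or] at hc hd
  obtain ⟨hcb, hcs⟩ := hc
  obtain ⟨hdb, hds⟩ := hd
  refine ⟨Equiv.swap b c * Equiv.swap b d,
    Equiv.Perm.isThreeCycle_swap_mul_swap_same (Ne.symm hcb) (Ne.symm hdb) hcd,
    fun y hy => ?_, ?_⟩
  · have hyb : y ≠ b := ne_of_mem_of_not_mem hy hb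
    have hyc : y ≠ c := ne_of_mem_of_not_mem hy hcs
    have hyd : y ≠ d := ne_of_mem_of_not_mem hy hds
    rw [Equiv.Perm.mul_apply, Equiv.swap_apply_of_ne_of_ne hyb hyd,
      Equiv.swap_apply_of_ne_of_ne hyb hyc]
  · rwa [Equiv.Perm.mul_apply, Equiv.swap_apply_left,
      Equiv.swap_apply_of_ne_of_ne hdb hcd.symm]

theorem stmt9_general (hcard : 5 ≤ Fintype.card α) (x : α) {g : Equiv.Perm α} (hg : g ≠ 1) :
    ∃ τ : alternatingGroup α, (τ : Equiv.Perm α) x = x ∧ ¬ Commute g (τ : Equiv.Perm α) := by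
  obtain ⟨a, hga, hgx⟩ := exists_apply_ne_and_apply_ne_of_ne_one hg x
  have hmem : g a ∉ ({a, x} : Finset α) := by
    simp only [Finset.mem_insert, Finset.mem_singleton, hga, hgx, or_self, not_false_eq_true]
  have hroom : ({a, x} : Finset α).card + 3 ≤ Fintype.card α :=
    (Nat.add_le_add_right Finset.card_le_two 3).trans hcard
  obtain ⟨τ, hτ, hfix, hmove⟩ := exists_isThreeCycle_fixing_and_apply_ne hmem hroom
  exact ⟨⟨τ, hτ.mem_alternatingGroup⟩, hfix x (by simp),
    fun h => hmove (apply_apply_eq_of_commute h (hfix a (by simp)))⟩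

end ThreeCycle

/-- If `α` is a finite type with at least `5` elements, `x ∈ α`, and `g` is a
non-identity element of the alternating group on `α` fixing `x`, then there is
`τ` in the alternating group fixing `x` which does not commute with `g`. -/
theorem stmt9 (α : Type*) [Fintype α] [DecidableEq α] (hcard : 5 ≤ Fintype.card α)
    (x : α) (g : alternatingGroup α) (hg : g ≠ 1)
    (hgx : (g : Equiv.Perm α) x = x) :
    ∃ τ : alternatingGroup α, (τ : Equiv.Perm α) x = x ∧ g * τ ≠ τ * g := by
  obtain ⟨τ, hτx, hτ⟩ := stmt9_general hcard x (OneMemClass.coe_eq_one.not.mpr hg)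
  exact ⟨τ, hτx, fun h => hτ (congrArg Subtype.val h)⟩
end

section
/- For every n ≥ 1, the map K_n → S_0 × S_1 × ⋯ × S_{n-1} sending g to the tuple of its restrictions (g|X̂_0, g|X̂_1, …, g|X̂_{n-1}) is a group isomorphism; in particular K_n ≅ ∏_{i=0}^{n-1} S_i. -/
/-- The difference `X̂_n = U_n \ U_{n+1}` of consecutive cylinders around `x̂`. -/
def ringX (X : ℕ → Type) (x : ∀ n, X n) (n : ℕ) : Set (∀ n, X n) :=
  cylU X x n \ cylU X x (n + 1)

/-- The group `S_n`: permutations of `X̂_n = U_n \ U_{n+1}` obtained as the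
restrictions to `X̂_n` of the elements of the discriminant group `D`. -/
def resS (X : ℕ → Type) (A : ∀ n, Subgroup (Equiv.Perm (X n))) (x : ∀ n, X n) (n : ℕ) :
    Set (Equiv.Perm ↥(ringX X x n)) :=
  {e | ∃ g ∈ discD X A x, ∀ w : ↥(ringX X x n), (e w).1 = g w.1}

/-! An element of `D` preserves the first index at which a point differs from `x̂`, so it acts
separately on each ring `X̂_i`. Conversely, given any sequence `(g_i)` in `D`, the map acting as
`g_i` on `X̂_i` and fixing `x̂` is again a portrait map: being a portrait map is a condition on one
coordinate over one cylinder at a time, and over each cylinder this map has, in the coordinate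
concerned, the values of a single `g_i`. Taking `g_i = 1` for `i ≥ n` makes the glued map fix `U_n`
pointwise, so restriction from `K_n` to `S_0 × ⋯ × S_{n-1}` is onto; it is injective because `U_n`
and the first `n` rings cover `X̂`. -/

section

open PiNat

theorem notMem_cylinder_iff {E : ℕ → Type*} {x w : ∀ n, E n} {n : ℕ} :
    w ∉ cylinder x n ↔ w ≠ x ∧ firstDiff w x < n := by
  rcases eq_or_ne w x with rfl | hwx
  · simp
  · rw [mem_cylinder_iff_le_firstDiff hwx, not_le, and_iff_right hwx]

theorem firstDiff_eq_of_notMem_cylinder {E : ℕ → Type*} {x y w : ∀ n, E n} {n : ℕ}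
    (hw : w ∉ cylinder x n) (hy : y ∈ cylinder w n) : firstDiff y x = firstDiff w x := by
  obtain ⟨hwx, hlt⟩ := notMem_cylinder_iff.1 hw
  have hne : y (firstDiff w x) ≠ x (firstDiff w x) := by
    rw [hy _ hlt]
    exact apply_firstDiff_ne hwx
  apply le_antisymm
  · exact not_lt.1 fun h => hne (apply_eq_of_lt_firstDiff h)
  · refine (mem_cylinder_iff_le_firstDiff (fun h => hne (congrFun h _)) _).1 fun i hi => ?_
    rw [hy i (hi.trans hlt), apply_eq_of_lt_firstDiff hi]

variable {X : ℕ → Type}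

theorem cylU_eq_cylinder (x : ∀ n, X n) (n : ℕ) : cylU X x n = cylinder x n :=
  rfl

theorem mem_ringX_iff {x w : ∀ n, X n} {i : ℕ} :
    w ∈ ringX X x i ↔ w ≠ x ∧ firstDiff w x = i := by
  rw [ringX, cylU_eq_cylinder, cylU_eq_cylinder, Set.mem_sdiff, notMem_cylinder_iff]
  constructor
  · rintro ⟨hmem, hwx, hlt⟩
    exact ⟨hwx, le_antisymm (Nat.le_of_lt_succ hlt) ((mem_cylinder_iff_le_firstDiff hwx i).1 hmem)⟩
  · rintro ⟨hwx, rfl⟩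
    exact ⟨mem_cylinder_firstDiff w x, hwx, Nat.lt_succ_self _⟩

theorem exists_mem_ringX_of_notMem_cylU {x w : ∀ n, X n} {n : ℕ} (hw : w ∉ cylU X x n) :
    ∃ i : Fin n, w ∈ ringX X x i := by
  rw [cylU_eq_cylinder, notMem_cylinder_iff] at hw
  obtain ⟨hwx, hlt⟩ := hw
  exact ⟨⟨_, hlt⟩, mem_ringX_iff.2 ⟨hwx, rfl⟩⟩

variable {A : ∀ n, Subgroup (Equiv.Perm (X n))}

theorem isPortrait_iff {f : Equiv.Perm (∀ n, X n)} :
    IsPortrait X A f ↔ ∀ x n, ∃ a ∈ A n, ∀ y ∈ cylinder x n, f y n = a (y n) := by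
  constructor
  · rintro ⟨a, ha⟩ x n
    refine ⟨a n fun i => x i, (a n _).2, fun y hy => ?_⟩
    have hword : (fun i : Fin n => y i) = fun i : Fin n => x i := funext fun i => hy i i.2
    rw [ha, hword]
  · intro h
    choose a ha hfa using h
    classical
    refine ⟨fun n v => if hv : ∃ x : ∀ n, X n, (fun i : Fin n => x i) = v then
      ⟨a hv.choose n, ha _ n⟩ else 1, fun x n => ?_⟩
    have hv : ∃ y : ∀ n, X n, (fun i : Fin n => y i) = fun i : Fin n => x i := ⟨x, rfl⟩
    beta_reduce
    rw [dif_pos hv]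
    exact hfa _ n x fun i hi => (congrFun hv.choose_spec ⟨i, hi⟩).symm

namespace IsPortrait

variable {f g : Equiv.Perm (∀ n, X n)}

theorem apply_mem_cylinder_iff (hf : IsPortrait X A f) {x y : ∀ n, X n} {n : ℕ} :
    f y ∈ cylinder (f x) n ↔ y ∈ cylinder x n := by
  induction n with
  | zero => simp
  | succ n ih =>
    obtain ⟨a, -, ha⟩ := isPortrait_iff.1 hf x n
    have hsucc (u v : ∀ n, X n) : u ∈ cylinder v (n + 1) ↔ u ∈ cylinder v n ∧ u n = v n :=
      Nat.forall_lt_succ_right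
    rw [hsucc, hsucc, ih]
    refine and_congr_right fun hy => ?_
    rw [ha y hy, ha x (self_mem_cylinder x n), a.injective.eq_iff]

theorem one : IsPortrait X A 1 :=
  ⟨fun _ _ => 1, fun _ _ => rfl⟩

theorem mul (hf : IsPortrait X A f) (hg : IsPortrait X A g) : IsPortrait X A (f * g) := by
  refine isPortrait_iff.2 fun x n => ?_
  obtain ⟨a, haA, ha⟩ := isPortrait_iff.1 hf (g x) n
  obtain ⟨b, hbA, hb⟩ := isPortrait_iff.1 hg x n
  refine ⟨a * b, mul_mem haA hbA, fun y hy => ?_⟩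
  rw [Equiv.Perm.mul_apply, ha _ (hg.apply_mem_cylinder_iff.2 hy), hb y hy, Equiv.Perm.mul_apply]

theorem symm (hf : IsPortrait X A f) : IsPortrait X A f.symm := by
  refine isPortrait_iff.2 fun x n => ?_
  obtain ⟨a, haA, ha⟩ := isPortrait_iff.1 hf (f.symm x) n
  refine ⟨a⁻¹, inv_mem haA, fun y hy => ?_⟩
  have hy' : f.symm y ∈ cylinder (f.symm x) n := by
    rwa [← hf.apply_mem_cylinder_iff, f.apply_symm_apply, f.apply_symm_apply]
  rw [Equiv.Perm.eq_inv_iff_eq, ← ha _ hy', f.apply_symm_apply]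

end IsPortrait

variable (A) in
/-- The group `W` of all portrait maps over `(A n)`. -/
def portraitSubgroup : Subgroup (Equiv.Perm (∀ n, X n)) where
  carrier := {f | IsPortrait X A f}
  one_mem' := IsPortrait.one
  mul_mem' := IsPortrait.mul
  inv_mem' := IsPortrait.symm

variable (A) in
/-- The discriminant group `D`, as a subgroup with carrier `discD`. -/
def discSubgroup (x : ∀ n, X n) : Subgroup (Equiv.Perm (∀ n, X n)) :=
  (portraitSubgroup A ⊓ MulAction.stabilizer _ x).copy (discD X A x) rfl

variable (A) in
/-- The group `K_n`, as a subgroup with carrier `stabK`. -/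
def stabSubgroup (x : ∀ n, X n) (n : ℕ) : Subgroup (Equiv.Perm (∀ n, X n)) :=
  (portraitSubgroup A ⊓ fixingSubgroup _ (cylU X x n)).copy (stabK X A x n) <|
    Set.ext fun _ => and_congr_right fun _ => (mem_fixingSubgroup_iff (Equiv.Perm (∀ n, X n))).symm

variable {x : ∀ n, X n} {n : ℕ}

theorem stabSubgroup_le_discSubgroup : stabSubgroup A x n ≤ discSubgroup A x :=
  fun _ hg => ⟨hg.1, hg.2 x (self_mem_cylinder x n)⟩

section Disc

variable {g : Equiv.Perm (∀ n, X n)} (hg : g ∈ discSubgroup A x) (w : ∀ n, X n)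
include hg

theorem apply_mem_cylinder_iff_of_mem_discSubgroup : g w ∈ cylinder x n ↔ w ∈ cylinder x n := by
  simpa only [hg.2] using hg.1.apply_mem_cylinder_iff (x := x) (y := w) (n := n)

theorem apply_eq_iff_of_mem_discSubgroup : g w = x ↔ w = x := by
  rw [← g.injective.eq_iff (a := w), hg.2]

theorem firstDiff_apply_of_mem_discSubgroup : firstDiff (g w) x = firstDiff w x := by
  by_cases hw : w = x
  · rw [hw, hg.2]
  · have hgw : g w ≠ x := mt (apply_eq_iff_of_mem_discSubgroup hg w).1 hw
    refine eq_of_forall_le_iff fun i => ?_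
    rw [← mem_cylinder_iff_le_firstDiff hgw, ← mem_cylinder_iff_le_firstDiff hw,
      apply_mem_cylinder_iff_of_mem_discSubgroup hg]

theorem apply_mem_ringX_iff_of_mem_discSubgroup {i : ℕ} : g w ∈ ringX X x i ↔ w ∈ ringX X x i := by
  rw [mem_ringX_iff, mem_ringX_iff, firstDiff_apply_of_mem_discSubgroup hg, ne_eq,
    apply_eq_iff_of_mem_discSubgroup hg]

end Disc

variable (A x) in
/-- The restriction homomorphism `ρ_i : D → Sym(X̂_i)`. -/
def ringPermHom (i : ℕ) : discSubgroup A x →* Equiv.Perm (ringX X x i) where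
  toFun g := g.1.subtypePerm fun w => apply_mem_ringX_iff_of_mem_discSubgroup g.2 w
  map_one' := rfl
  map_mul' _ _ := rfl

theorem coe_range_ringPermHom (i : ℕ) :
    ((ringPermHom A x i).range : Set (Equiv.Perm (ringX X x i))) = resS X A x i := by
  ext e
  constructor
  · rintro ⟨g, rfl⟩
    exact ⟨g, g.2, fun _ => rfl⟩
  · rintro ⟨g, hg, he⟩
    exact ⟨⟨g, hg⟩, Equiv.ext fun w => Subtype.ext (he w).symm⟩

variable (A x) in
/-- The group `S_i`, as a subgroup with carrier `resS`. -/
def resSubgroup (i : ℕ) : Subgroup (Equiv.Perm (ringX X x i)) :=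
  (ringPermHom A x i).range.copy (resS X A x i) (coe_range_ringPermHom i).symm

variable (A x) in
/-- The homomorphism `g ↦ (g|X̂_0, …, g|X̂_{n-1})` from `K_n` to `S_0 × ⋯ × S_{n-1}`. -/
def ringRestrictHom (n : ℕ) : stabSubgroup A x n →* ∀ i : Fin n, resSubgroup A x i :=
  MonoidHom.pi fun i =>
    ((ringPermHom A x i).codRestrict (resSubgroup A x i)
      fun g => show _ ∈ resS X A x i from ⟨g, g.2, fun _ => rfl⟩).comp
      (Subgroup.inclusion stabSubgroup_le_discSubgroup)

/-- The permutation of `X̂` that acts as `g i` on the ring `X̂_i` for every `i`. The point `x̂` lies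
on no ring and is fixed; there `firstDiff` takes the junk value `0`, which is harmless since `g 0`
fixes `x̂`. -/
noncomputable def glue (g : ℕ → discSubgroup A x) : Equiv.Perm (∀ n, X n) where
  toFun w := (g (firstDiff w x)).1 w
  invFun w := (g (firstDiff w x)).1.symm w
  left_inv w := by simp only [firstDiff_apply_of_mem_discSubgroup (g _).2, Equiv.symm_apply_apply]
  right_inv w := by
    have hsymm : firstDiff ((g (firstDiff w x)).1.symm w) x = firstDiff w x :=
      firstDiff_apply_of_mem_discSubgroup (inv_mem (g _).2) w
    simp only [hsymm, Equiv.apply_symm_apply]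

theorem glue_apply (g : ℕ → discSubgroup A x) (w : ∀ n, X n) :
    glue g w = (g (firstDiff w x)).1 w :=
  rfl

theorem glue_apply_of_mem_ringX (g : ℕ → discSubgroup A x) {w : ∀ n, X n} {i : ℕ}
    (hw : w ∈ ringX X x i) : glue g w = (g i).1 w := by
  rw [glue_apply, (mem_ringX_iff.1 hw).2]

theorem glue_apply_coord_of_mem_cylinder (g : ℕ → discSubgroup A x) {w : ∀ n, X n}
    (hw : w ∈ cylinder x n) : glue g w n = (g n).1 w n := by
  by_cases hw' : w ∈ cylinder x (n + 1)
  · have hfix (h : discSubgroup A x) : h.1 w n = x n :=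
      (apply_mem_cylinder_iff_of_mem_discSubgroup h.2 w).2 hw' n n.lt_succ_self
    rw [glue_apply, hfix, hfix]
  · rw [glue_apply_of_mem_ringX g ⟨hw, hw'⟩]

theorem glue_mem_discSubgroup (g : ℕ → discSubgroup A x) : glue g ∈ discSubgroup A x := by
  refine ⟨isPortrait_iff.2 fun w m => ?_, (g _).2.2⟩
  by_cases hw : w ∈ cylinder x m
  · obtain ⟨a, haA, ha⟩ := isPortrait_iff.1 (g m).2.1 w m
    refine ⟨a, haA, fun y hy => ?_⟩
    have hyx : y ∈ cylinder x m := mem_cylinder_iff_eq.1 hw ▸ hy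
    rw [glue_apply_coord_of_mem_cylinder g hyx, ha y hy]
  · obtain ⟨a, haA, ha⟩ := isPortrait_iff.1 (g (firstDiff w x)).2.1 w m
    refine ⟨a, haA, fun y hy => ?_⟩
    rw [glue_apply, firstDiff_eq_of_notMem_cylinder hw hy, ha y hy]

theorem glue_mem_stabSubgroup {g : ℕ → discSubgroup A x} (hg : ∀ i, n ≤ i → g i = 1) :
    glue g ∈ stabSubgroup A x n := by
  refine ⟨(glue_mem_discSubgroup g).1, fun w hw => ?_⟩
  by_cases hwx : w = x
  · rw [hwx]
    exact (glue_mem_discSubgroup g).2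
  · rw [glue_apply, hg _ ((mem_cylinder_iff_le_firstDiff hwx n).1 hw)]
    rfl

theorem ringRestrictHom_injective : Function.Injective (ringRestrictHom A x n) := by
  intro g h hgh
  refine Subtype.ext (Equiv.ext fun w => ?_)
  by_cases hw : w ∈ cylU X x n
  · rw [g.2.2 w hw, h.2.2 w hw]
  · obtain ⟨i, hi⟩ := exists_mem_ringX_of_notMem_cylU hw
    exact congrArg (fun e => ((e i).1 ⟨w, hi⟩).1) hgh

theorem ringRestrictHom_surjective : Function.Surjective (ringRestrictHom A x n) := by
  intro e
  choose g hgD hge using fun i => (e i).2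
  let g' (i : ℕ) : discSubgroup A x := if hi : i < n then ⟨g ⟨i, hi⟩, hgD _⟩ else 1
  have hg' : ∀ i, n ≤ i → g' i = 1 := fun i hi => dif_neg hi.not_gt
  refine ⟨⟨glue g', glue_mem_stabSubgroup hg'⟩, ?_⟩
  refine funext fun i => Subtype.ext (Equiv.ext fun w => Subtype.ext ?_)
  calc glue g' w = (g' i).1 w := glue_apply_of_mem_ringX g' w.2
    _ = g i w := by simp only [g', dif_pos i.2]
    _ = (e i).1 w := (hge i w).symm

end

theorem stmt12_general {X : ℕ → Type} (A : ∀ n, Subgroup (Equiv.Perm (X n))) (x : ∀ n, X n)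
    (n : ℕ) :
    ∃ ψ : stabSubgroup A x n ≃* ∀ i : Fin n, resSubgroup A x i,
      ∀ (g : stabSubgroup A x n) (i : Fin n) (w : ringX X x i), ((ψ g i).1 w).1 = g.1 w :=
  ⟨.ofBijective (ringRestrictHom A x n) ⟨ringRestrictHom_injective, ringRestrictHom_surjective⟩,
    fun _ _ _ => rfl⟩

/-- For every `n ≥ 1`, the map sending `g ∈ K_n` to the tuple of its
restrictions `(g|X̂_0, …, g|X̂_{n-1})` is a group isomorphism onto
`S_0 × S_1 × ⋯ × S_{n-1}`: it is a bijection compatible with products. -/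
theorem stmt12 (X : ℕ → Type) [∀ n, Finite (X n)]
    (hcard : ∀ n, 2 ≤ Nat.card (X n))
    (A : ∀ n, Subgroup (Equiv.Perm (X n)))
    (htrans : ∀ n, ∀ y z : X n, ∃ a ∈ A n, a y = z)
    (x : ∀ n, X n) (n : ℕ) (hn : 1 ≤ n) :
    ∃ ψ : ↥(stabK X A x n) ≃ ((i : Fin n) → ↥(resS X A x i.1)),
      (∀ (g : ↥(stabK X A x n)) (i : Fin n) (w : ↥(ringX X x i.1)),
        ((ψ g i).1 w).1 = g.1 w.1) ∧
      (∀ g h : ↥(stabK X A x n), ∃ hm : g.1 * h.1 ∈ stabK X A x n,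
        ∀ i : Fin n, (ψ ⟨g.1 * h.1, hm⟩ i).1 = (ψ g i).1 * (ψ h i).1) := by
  obtain ⟨ψ, hψ⟩ := stmt12_general A x n
  exact ⟨ψ.toEquiv, hψ, fun g h => ⟨(stabSubgroup A x n).mul_mem g.2 h.2,
    fun i => congrArg (fun e => (e i).1) (ψ.map_mul g h)⟩⟩
end

section
/- Let ℓ₁, ℓ₂ ≥ 3 be odd integers, and let n ∈ ℕ satisfy ℓ₁ ≤ n, ℓ₂ ≤ n and n < ℓ₁ + ℓ₂. Then there exist permutations σ₁, σ₂ of Fin n such that σ₁ and σ₂ are cycles, orderOf(σ₁) = ℓ₁, orderOf(σ₂) = ℓ₂, both σ₁ and σ₂ lie in the alternating group Alt(Fin n), and the subgroup they generate is all of Alt(Fin n). -/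
/-! Let two points be linked when some 3-cycle of `G ≤ Perm α` moves both. A nontrivial block of `G`
is closed under links, so if links connect all of `α` then `G` is primitive, and by Jordan's theorem
it contains the alternating group. Conjugating a single link by a cycle of `G` already produces
enough links, so one suitable link is all that is needed.

The cycles are `(0 1 ⋯ c)` and `(b ⋯ n-1)` with `b ≤ c`, the first one not longer than the second
one. For `0 < b < c < n-2` commutators of the two cycles and of their inverses are products of two
transpositions: `G` contains `(0 c+1)(b b+1)` and, after conjugating by a power of the first cycle,
`(c-b c-b+1)(0 n-1)`. As `c` is even, the pairs `{b, b+1}` and `{c-b, c-b+1}` are equal or disjoint,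
so the square of the product of these two elements is `((0 c+1)(0 n-1))²`, a 3-cycle which links a
point moved only by the first cycle to a point moved only by the second one. In the extreme
positions of `b` and `c` already a commutator of the two cycles or the quotient of one by the other
is a 3-cycle. When both cycles have length `n`, the second one is taken to be the conjugate of the
first one by the transposition `(0 1)` instead. -/

open Equiv Equiv.Perm MulAction
open scoped Pointwise commutatorElement

section Group
variable {M H : Type*} [Monoid M] [Group H]

theorem mul_mul_mul_sq_eq {p q r s : M} (hp : p * p = 1) (hq : q * q = 1)
    (hpq : Commute p q) (hpr : Commute p r) (hps : Commute p s) (hqr : Commute q r)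
    (hqs : Commute q s) : (r * p * (q * s)) ^ 2 = (r * s) ^ 2 := by
  have hpq1 : (p * q) ^ 2 = 1 := by rw [hpq.mul_pow, sq p, sq q, hp, hq, one_mul]
  have hcomm : Commute (p * q) (r * s) := (hpr.mul_right hps).mul_left (hqr.mul_right hqs)
  calc (r * p * (q * s)) ^ 2 = (p * q * (r * s)) ^ 2 := by
        rw [← hpr.eq, mul_assoc, ← mul_assoc r q s, ← hqr.eq, mul_assoc, mul_assoc]
    _ = (r * s) ^ 2 := by rw [hcomm.mul_pow, hpq1, one_mul]

theorem commutatorElement_mem {K : Subgroup H} {g h : H} (hg : g ∈ K) (hh : h ∈ K) : ⁅g, h⁆ ∈ K :=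
  K.mul_mem (K.mul_mem (K.mul_mem hg hh) (K.inv_mem hg)) (K.inv_mem hh)

end Group

section Swap
variable {α : Type*} [DecidableEq α] {G : Subgroup (Perm α)} {σ : Perm α} {a b u v : α}

theorem commute_swap_swap (hau : a ≠ u) (hav : a ≠ v) (hbu : b ≠ u) (hbv : b ≠ v) :
    Commute (swap a b) (swap u v) := by
  rw [commute_iff_eq, ← mul_inv_eq_iff_eq_mul, ← swap_apply_apply,
    swap_apply_of_ne_of_ne hau.symm hbu.symm, swap_apply_of_ne_of_ne hav.symm hbv.symm]

theorem swap_mul_swap_mem_of_mem (h : swap a b * swap u v ∈ G) (hσ : σ ∈ G) :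
    swap (σ a) (σ b) * swap (σ u) (σ v) ∈ G := by
  rw [swap_apply_apply, swap_apply_apply, conj_mul]
  exact G.mul_mem (G.mul_mem hσ h) (G.inv_mem hσ)

theorem commutatorElement_swap_apply_inv (σ : Perm α) (x : α) :
    ⁅swap x (σ x), σ⁻¹⁆ = swap x (σ x) * swap x (σ⁻¹ x) := by
  rw [commutatorElement_def, mul_assoc, mul_assoc, swap_inv, inv_inv]
  congr 1
  rw [← mul_assoc, swap_comm x (σ⁻¹ x)]
  simpa using (swap_apply_apply σ⁻¹ x (σ x)).symm

end Swap

section Linked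
variable {α : Type*} [Fintype α] [DecidableEq α] {G : Subgroup (Perm α)} {σ τ : Perm α}
  {a b c x y : α}

theorem mem_alternatingGroup_of_odd_orderOf (h : Odd (orderOf σ)) : σ ∈ alternatingGroup α := by
  rw [Perm.mem_alternatingGroup]
  have hpow : sign σ ^ orderOf σ = 1 := by rw [← map_pow, pow_orderOf_eq_one, map_one]
  obtain hs | hs := Int.units_eq_one_or (sign σ)
  · exact hs
  · rw [hs, h.neg_one_pow] at hpow; exact absurd hpow (by decide)

theorem eq_or_apply_eq_of_isThreeCycle {t : Perm α} (ht : t.IsThreeCycle)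
    (hx : t x ≠ x) (hy : t y ≠ y) : y = x ∨ t x = y ∨ t y = x := by
  have hcube : t (t (t x)) = x := by
    simpa [ht.orderOf, pow_succ] using DFunLike.congr_fun (pow_orderOf_eq_one t) x
  have hy' : y ∈ ({x, t x, t (t x)} : Finset α) := by
    rw [← ht.support_eq_iff_mem_support.mpr (mem_support.mpr hx)]
    exact mem_support.mpr hy
  simp only [Finset.mem_insert, Finset.mem_singleton] at hy'
  obtain rfl | rfl | rfl := hy'
  exacts [.inl rfl, .inr (.inl rfl), .inr (.inr hcube)]

/-- Two points are linked by `G` when a single 3-cycle in `G` moves both of them. Links are the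
edges of a graph on `α` whose connectedness forces `G` to be primitive. -/
def Linked (G : Subgroup (Perm α)) (x y : α) : Prop :=
  ∃ t ∈ G, t.IsThreeCycle ∧ t x ≠ x ∧ t y ≠ y

theorem Linked.symm : Linked G x y → Linked G y x :=
  fun ⟨t, htG, ht, hx, hy⟩ ↦ ⟨t, htG, ht, hy, hx⟩

theorem Linked.apply (h : Linked G x y) (hσ : σ ∈ G) : Linked G (σ x) (σ y) := by
  obtain ⟨t, htG, ht, hx, hy⟩ := h
  refine ⟨σ * t * σ⁻¹, G.mul_mem (G.mul_mem hσ htG) (G.inv_mem hσ), ?_, ?_, ?_⟩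
  · rwa [IsThreeCycle, cycleType_conj]
  · simpa using hx
  · simpa using hy

theorem Linked.mem_of_isBlock (h : Linked G x y) {B : Set α} (hB : IsBlock G B)
    (hnt : B.Nontrivial) (hx : x ∈ B) : y ∈ B := by
  obtain ⟨t, htG, ht, hxt, hyt⟩ := h
  obtain ⟨w, hw, hwx⟩ := hnt.exists_ne x
  have hmaps : ∃ v ∈ B, t v ∈ B := by
    by_cases hwt : t w = w
    · exact ⟨w, hw, hwt.symm ▸ hw⟩
    · obtain h | h | h := eq_or_apply_eq_of_isThreeCycle ht hxt hwt
      · exact absurd h hwx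
      · exact ⟨x, hx, h ▸ hw⟩
      · exact ⟨w, hw, h ▸ hx⟩
  obtain ⟨v, hv, htv⟩ := hmaps
  have hstab : (⟨t, htG⟩ : G) • B = B := hB.smul_eq_of_mem hv htv
  have hmem (z : α) : t z ∈ B ↔ z ∈ B := by
    conv_lhs => rw [← hstab]
    exact Set.smul_mem_smul_set_iff (a := (⟨t, htG⟩ : G))
  obtain rfl | rfl | rfl := eq_or_apply_eq_of_isThreeCycle ht hxt hyt
  exacts [hx, (hmem x).mpr hx, (hmem y).mp hx]

theorem linked_of_swap_mul_swap_mem (hab : a ≠ b) (hac : a ≠ c) (hbc : b ≠ c)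
    (h : swap a b * swap a c ∈ G) : Linked G a b := by
  refine ⟨_, h, isThreeCycle_swap_mul_swap_same hab hac hbc, ?_, ?_⟩
  · simp [swap_apply_of_ne_of_ne hac.symm hbc.symm, hac.symm]
  · simp [swap_apply_of_ne_of_ne hab.symm hbc, hab]

theorem linked_of_swap_mul_swap_sq_mem (hab : a ≠ b) (hac : a ≠ c) (hbc : b ≠ c)
    (h : (swap a b * swap a c) ^ 2 ∈ G) : Linked G a b := by
  have hcube : (swap a b * swap a c) ^ 3 = 1 := by
    rw [← (isThreeCycle_swap_mul_swap_same hab hac hbc).orderOf, pow_orderOf_eq_one]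
  refine linked_of_swap_mul_swap_mem hab hac hbc ?_
  simpa [← pow_mul, pow_succ (n := 3), hcube] using G.pow_mem h 2

theorem alternatingGroup_le_of_eqvGen_linked (hab : Linked G a b)
    (h : ∀ x, Relation.EqvGen (Linked G) a x) : alternatingGroup α ≤ G := by
  obtain ⟨t, htG, ht, hta, -⟩ := hab
  have hfix : fixedPoints G α ≠ ⊤ := fun htop ↦
    hta ((htop ▸ Set.mem_univ a : a ∈ fixedPoints G α) ⟨t, htG⟩)
  suffices IsPreprimitive G α from
    alternatingGroup_le_of_isPreprimitive_of_isThreeCycle_mem this ht htG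
  refine .mk' hfix fun {B} hB ↦ ?_
  refine or_iff_not_imp_left.mpr fun hB' ↦ ?_
  have hnt : B.Nontrivial := Set.not_subsingleton_iff.mp hB'
  have hmem {x y : α} (hxy : Relation.EqvGen (Linked G) x y) : x ∈ B ↔ y ∈ B := by
    induction hxy with
    | rel x y h => exact ⟨h.mem_of_isBlock hB hnt, h.symm.mem_of_isBlock hB hnt⟩
    | refl x => rfl
    | symm x y _ ih => exact ih.symm
    | trans x y z _ _ ihxy ihyz => exact ihxy.trans ihyz
  obtain ⟨v, hv⟩ := hnt.nonempty
  exact Set.eq_univ_of_forall fun y ↦ (hmem (h y)).mp ((hmem (h v)).mpr hv)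

theorem alternatingGroup_le_of_linked_of_isCycle (hσ : σ ∈ G) (hσc : σ.IsCycle)
    (hmove : ∀ x, σ x ≠ x) (h : Linked G a (σ a)) : alternatingGroup α ≤ G := by
  refine alternatingGroup_le_of_eqvGen_linked h fun x ↦ ?_
  obtain ⟨k, rfl⟩ := hσc.exists_pow_eq (hmove a) (hmove x)
  induction k with
  | zero => exact .refl _
  | succ k ih =>
    refine .trans _ _ _ ih (.rel _ _ ?_)
    rw [pow_succ, Perm.mul_apply]
    exact h.apply (G.pow_mem hσ k)

theorem alternatingGroup_le_of_linked_of_isCycle_of_isCycle (hσ : σ ∈ G) (hτ : τ ∈ G)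
    (hσc : σ.IsCycle) (hτc : τ.IsCycle) (hmove : ∀ x, σ x ≠ x ∨ τ x ≠ x) (h : Linked G a b)
    (hσa : σ a ≠ a) (hτa : τ a = a) (hτb : τ b ≠ b) (hσb : σ b = b) : alternatingGroup α ≤ G := by
  refine alternatingGroup_le_of_eqvGen_linked h fun x ↦ ?_
  obtain hx | hx := hmove x
  · obtain ⟨k, rfl⟩ := hσc.exists_zpow_eq hσa hx
    have hk := h.apply (G.zpow_mem hσ k)
    rw [zpow_apply_eq_self_of_apply_eq_self hσb] at hk
    exact .trans _ _ _ (.rel _ _ h) (.rel _ _ hk.symm)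
  · obtain ⟨k, rfl⟩ := hτc.exists_zpow_eq hτb hx
    have hk := h.apply (G.zpow_mem hτ k)
    rw [zpow_apply_eq_self_of_apply_eq_self hτa] at hk
    exact .rel _ _ hk

theorem alternatingGroup_le_of_swap_conj_mem (hσ : σ ∈ G) (hσc : σ.IsCycle)
    (hmove : ∀ y, σ y ≠ y) (hx : σ (σ x) ≠ x)
    (hτ : swap x (σ x) * σ * (swap x (σ x))⁻¹ ∈ G) : alternatingGroup α ≤ G := by
  have hmem : swap x (σ x) * swap x (σ⁻¹ x) ∈ G := by
    have h : ⁅swap x (σ x), σ⁻¹⁆ = (swap x (σ x) * σ * (swap x (σ x))⁻¹)⁻¹ * σ := by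
      simp only [commutatorElement_def]; group
    rw [← commutatorElement_swap_apply_inv, h]
    exact G.mul_mem (G.inv_mem hτ) hσ
  refine alternatingGroup_le_of_linked_of_isCycle hσ hσc hmove
    (linked_of_swap_mul_swap_mem (hmove x).symm ?_ ?_ hmem)
  · exact fun h ↦ hmove x (eq_inv_iff_eq.mp h)
  · exact fun h ↦ hx (eq_inv_iff_eq.mp h)

end Linked

section Interval
variable {n : ℕ} {a a' b b' c c' d u u' : Fin n} {G : Subgroup (Perm (Fin n))}

theorem val_cycleIcc_apply {i j : Fin n} (hij : i ≤ j) (x : Fin n) :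
    (Fin.cycleIcc i j x : ℕ) =
      if (x : ℕ) < i then (x : ℕ) else if (x : ℕ) < j then x + 1
        else if (x : ℕ) = j then (i : ℕ) else x := by
  have : NeZero n := NeZero.of_pos x.pos
  split_ifs with hxi hxj hx
  · rw [Fin.cycleIcc_of_lt hxi]
  · rw [Fin.cycleIcc_of_ge_of_lt (not_lt.mp hxi) hxj]
    exact Fin.val_add_one_of_lt' (by omega)
  · rw [Fin.ext hx, Fin.cycleIcc_of_last hij]
  · rw [Fin.cycleIcc_of_gt (Fin.lt_def.mpr (by omega))]

theorem val_swap_apply (i j x : Fin n) :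
    (swap i j x : ℕ) = if (x : ℕ) = i then (j : ℕ) else if (x : ℕ) = j then (i : ℕ) else x := by
  simp only [swap_apply_def, Fin.ext_iff, apply_ite Fin.val]

theorem cycleIcc_apply_ne {a c x : Fin n} (hac : a < c) (hax : a ≤ x) (hxc : x ≤ c) :
    Fin.cycleIcc a c x ≠ x := by
  rw [Ne, Fin.ext_iff, val_cycleIcc_apply hac.le]
  split_ifs <;> lia

theorem cycleIcc_pow_apply_eq {a c x y : Fin n} {t : ℕ} (hax : a ≤ x) (hyc : y ≤ c)
    (hxy : (x : ℕ) + t = y) : (Fin.cycleIcc a c ^ t) x = y := by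
  induction t generalizing y with
  | zero => exact Fin.ext hxy
  | succ t ih =>
    have hz : (x : ℕ) + t < n := by lia
    rw [pow_succ', Perm.mul_apply, ih (y := ⟨x + t, hz⟩) (Fin.le_def.mpr (by lia)) rfl]
    refine Fin.ext ?_
    rw [val_cycleIcc_apply (by lia)]
    grind

theorem cycleIcc_apply_eq {a c x y : Fin n} (hax : a ≤ x) (hyc : y ≤ c)
    (hxy : (x : ℕ) + 1 = y) : Fin.cycleIcc a c x = y := by
  simpa only [pow_one] using cycleIcc_pow_apply_eq hax hyc hxy

theorem orderOf_cycleIcc {i j : Fin n} (hij : i < j) :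
    orderOf (Fin.cycleIcc i j) = j - i + 1 := by
  rw [← lcm_cycleType, Fin.cycleType_cycleIcc_of_lt hij]
  simp

theorem commutatorElement_inv_cycleIcc_of_lt (hab : a < b) (hbc : b < c) (hcd : c < d)
    (hb : (b' : ℕ) + 1 = b) (hc : (c' : ℕ) + 1 = c) :
    ⁅(Fin.cycleIcc a c)⁻¹, (Fin.cycleIcc b d)⁻¹⁆ = swap c' c * swap b' d := by
  rw [commutatorElement_def, inv_inv, inv_inv, mul_assoc, mul_assoc, inv_mul_eq_iff_eq_mul,
    inv_mul_eq_iff_eq_mul]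
  ext x
  simp only [Perm.mul_apply, val_cycleIcc_apply (hab.trans hbc).le,
    val_cycleIcc_apply (hbc.trans hcd).le, val_swap_apply]
  grind

theorem commutatorElement_cycleIcc_of_lt (hab : a < b) (hbc : b < c) (hcd : c < d)
    (hb : (b : ℕ) + 1 = b') (hc : (c : ℕ) + 1 = c') :
    ⁅Fin.cycleIcc a c, Fin.cycleIcc b d⁆ = swap a c' * swap b b' := by
  obtain ⟨b₀, hb₀⟩ : ∃ b₀ : Fin n, (b₀ : ℕ) + 1 = b := ⟨⟨b - 1, by lia⟩, by grind⟩
  obtain ⟨c₀, hc₀⟩ : ∃ c₀ : Fin n, (c₀ : ℕ) + 1 = c := ⟨⟨c - 1, by lia⟩, by grind⟩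
  have : NeZero n := .of_pos a.pos
  set σ := Fin.cycleIcc a c
  set τ := Fin.cycleIcc b d
  have hτc₀ : τ c₀ = c := cycleIcc_apply_eq (by lia) hcd.le hc₀
  have hτc : τ c = c' := cycleIcc_apply_eq hbc.le (by lia) hc
  have hτb₀ : τ b₀ = b₀ := Fin.cycleIcc_of_lt (by lia)
  have hτd : τ d = b := Fin.cycleIcc_of_last (by lia)
  have hσc : σ c = a := Fin.cycleIcc_of_last (by lia)
  have hσc' : σ c' = c' := Fin.cycleIcc_of_gt (by lia)
  have hσb₀ : σ b₀ = b := cycleIcc_apply_eq (by lia) hbc.le hb₀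
  have hσb : σ b = b' := cycleIcc_apply_eq hab.le (by lia) hb
  calc ⁅σ, τ⁆ = (σ * τ) * ⁅σ⁻¹, τ⁻¹⁆ * (σ * τ)⁻¹ := by
        simp only [commutatorElement_def]; group
    _ = (σ * τ) * (swap c₀ c * swap b₀ d) * (σ * τ)⁻¹ := by
        rw [commutatorElement_inv_cycleIcc_of_lt hab hbc hcd hb₀ hc₀]
    _ = swap a c' * swap b b' := by
        rw [← conj_mul, ← swap_apply_apply, ← swap_apply_apply]
        simp only [Perm.mul_apply, hτc₀, hτc, hτb₀, hτd, hσc, hσc', hσb₀, hσb]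

theorem commutatorElement_cycleIcc_of_eq (hac : a < c) (hcd : c < d) (hc : (c : ℕ) + 1 = c') :
    ⁅Fin.cycleIcc c d, Fin.cycleIcc a c⁆ = swap a c' * swap a c := by
  rw [commutatorElement_def, mul_inv_eq_iff_eq_mul, mul_inv_eq_iff_eq_mul]
  ext x
  simp only [Perm.mul_apply, val_cycleIcc_apply hac.le, val_cycleIcc_apply hcd.le, val_swap_apply]
  grind

theorem commutatorElement_cycleIcc_left (hac : a < c) (hcd : c < d)
    (ha : (a : ℕ) + 1 = a') (hc : (c : ℕ) + 1 = c') :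
    ⁅Fin.cycleIcc a d, Fin.cycleIcc a c⁆ = swap a a' * swap a c' := by
  rw [commutatorElement_def, mul_inv_eq_iff_eq_mul, mul_inv_eq_iff_eq_mul]
  ext x
  simp only [Perm.mul_apply, val_cycleIcc_apply hac.le, val_cycleIcc_apply (hac.trans hcd).le,
    val_swap_apply]
  grind

theorem cycleIcc_mul_inv_cycleIcc_succ (hac : a < c)
    (ha : (a : ℕ) + 1 = a') (hc : (c : ℕ) + 1 = c') :
    Fin.cycleIcc a c * (Fin.cycleIcc a' c')⁻¹ = swap a c' * swap a a' := by
  have hac' : a' ≤ c' := Fin.le_def.mpr (by omega)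
  rw [mul_inv_eq_iff_eq_mul]
  ext x
  simp only [Perm.mul_apply, val_cycleIcc_apply hac.le, val_cycleIcc_apply hac', val_swap_apply]
  grind

theorem swap_mul_swap_mem_of_cycleIcc_mem (hab : a < b) (hbc : b < c) (hcd : c < d)
    (hu : (u : ℕ) + b = a + c) (hu' : (u : ℕ) + 1 = u')
    (hσ : Fin.cycleIcc a c ∈ G) (hτ : Fin.cycleIcc b d ∈ G) : swap u u' * swap a d ∈ G := by
  obtain ⟨b₀, hb₀⟩ : ∃ b₀ : Fin n, (b₀ : ℕ) + 1 = b := ⟨⟨b - 1, by lia⟩, by grind⟩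
  obtain ⟨c₀, hc₀⟩ : ∃ c₀ : Fin n, (c₀ : ℕ) + 1 = c := ⟨⟨c - 1, by lia⟩, by grind⟩
  have hD : swap c₀ c * swap b₀ d ∈ G := by
    rw [← commutatorElement_inv_cycleIcc_of_lt hab hbc hcd hb₀ hc₀]
    exact commutatorElement_mem (G.inv_mem hσ) (G.inv_mem hτ)
  let ρ := Fin.cycleIcc a c ^ (b₀ - a : ℕ)
  have hρu : ρ u = c₀ := cycleIcc_pow_apply_eq (by lia) (by lia) (by lia)
  have hρu' : ρ u' = c := cycleIcc_pow_apply_eq (by lia) le_rfl (by lia)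
  have hρa : ρ a = b₀ := cycleIcc_pow_apply_eq le_rfl (by lia) (by lia)
  have hρd : ρ d = d := pow_apply_eq_self_of_apply_eq_self (Fin.cycleIcc_of_gt hcd) _
  have hconj := swap_mul_swap_mem_of_mem hD (G.inv_mem (G.pow_mem hσ (b₀ - a : ℕ)))
  rwa [inv_eq_iff_eq.mpr hρu.symm, inv_eq_iff_eq.mpr hρu'.symm, inv_eq_iff_eq.mpr hρa.symm,
    inv_eq_iff_eq.mpr hρd.symm] at hconj

theorem linked_of_cycleIcc_mem_of_even (hab : a < b) (hbc : b < c) (hcd' : c' < d)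
    (hc : (c : ℕ) + 1 = c') (heven : Even ((a : ℕ) + c))
    (hσ : Fin.cycleIcc a c ∈ G) (hτ : Fin.cycleIcc b d ∈ G) : Linked G a c' := by
  have hcd : c < d := by lia
  obtain ⟨b', hb⟩ : ∃ b' : Fin n, (b : ℕ) + 1 = b' := ⟨⟨b + 1, by lia⟩, rfl⟩
  obtain ⟨u, hu⟩ : ∃ u : Fin n, (u : ℕ) + b = a + c := ⟨⟨a + c - b, by lia⟩, by grind⟩
  obtain ⟨u', hu'⟩ : ∃ u' : Fin n, (u : ℕ) + 1 = u' := ⟨⟨u + 1, by lia⟩, rfl⟩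
  have hD₁ : swap a c' * swap b b' ∈ G := by
    rw [← commutatorElement_cycleIcc_of_lt hab hbc hcd hb hc]
    exact commutatorElement_mem hσ hτ
  have hD₂ : swap u u' * swap a d ∈ G :=
    swap_mul_swap_mem_of_cycleIcc_mem hab hbc hcd hu hu' hσ hτ
  have hsep : b = u ∨ b' < u ∨ u' < b := by
    obtain ⟨k, hk⟩ := heven
    lia
  have hpair : Commute (swap b b') (swap u u') := by
    obtain rfl | hsep := hsep
    · rw [show b' = u' by lia]
    · exact commute_swap_swap (by lia) (by lia) (by lia) (by lia)
  refine linked_of_swap_mul_swap_sq_mem (c := d) (by lia) (by lia) (by lia) ?_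
  rw [← mul_mul_mul_sq_eq (swap_mul_self b b') (swap_mul_self u u') hpair
    (commute_swap_swap (by lia) (by lia) (by lia) (by lia))
    (commute_swap_swap (by lia) (by lia) (by lia) (by lia))
    (commute_swap_swap (by lia) (by lia) (by lia) (by lia))
    (commute_swap_swap (by lia) (by lia) (by lia) (by lia))]
  exact G.pow_mem (G.mul_mem hD₁ hD₂) 2

theorem exists_linked_of_cycleIcc_mem (hab : a < b) (hbc : b ≤ c) (hcd : c < d)
    (hle : (b : ℕ) + c ≤ a + d) (heven : Even ((a : ℕ) + c))
    (hσ : Fin.cycleIcc a c ∈ G) (hτ : Fin.cycleIcc b d ∈ G) : ∃ e, c < e ∧ Linked G a e := by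
  obtain ⟨c', hc⟩ : ∃ c' : Fin n, (c : ℕ) + 1 = c' := ⟨⟨c + 1, by lia⟩, rfl⟩
  obtain rfl | hbc := hbc.eq_or_lt
  · have hmem : swap a c' * swap a b ∈ G := by
      rw [← commutatorElement_cycleIcc_of_eq hab hcd hc]
      exact commutatorElement_mem hτ hσ
    exact ⟨c', by lia, linked_of_swap_mul_swap_mem (by lia) (by lia) (by lia) hmem⟩
  obtain hcd' | rfl := (show c' ≤ d by lia).lt_or_eq
  · exact ⟨c', by lia, linked_of_cycleIcc_mem_of_even hab hbc hcd' hc heven hσ hτ⟩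
  · have hmem : swap a c' * swap a b ∈ G := by
      rw [← cycleIcc_mul_inv_cycleIcc_succ (hab.trans hbc) (by lia) hc]
      exact G.mul_mem hσ (G.inv_mem hτ)
    exact ⟨c', hcd, linked_of_swap_mul_swap_mem (by lia) (by lia) (by lia) hmem⟩

theorem alternatingGroup_le_of_cycleIcc_mem (ha : (a : ℕ) = 0) (hd : (d : ℕ) + 1 = n)
    (hab : a < b) (hbc : b ≤ c) (hcd : c < d) (hle : (b : ℕ) + c ≤ d) (heven : Even (c : ℕ))
    (hσ : Fin.cycleIcc a c ∈ G) (hτ : Fin.cycleIcc b d ∈ G) : alternatingGroup (Fin n) ≤ G := by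
  have hac : a < c := hab.trans_le hbc
  have hbd : b < d := hbc.trans_lt hcd
  obtain ⟨e, hce, he⟩ := exists_linked_of_cycleIcc_mem hab hbc hcd (by lia)
    (by rwa [ha, zero_add]) hσ hτ
  have hmove (x : Fin n) : Fin.cycleIcc a c x ≠ x ∨ Fin.cycleIcc b d x ≠ x := by
    obtain hxc | hcx := le_or_gt x c
    · exact .inl (cycleIcc_apply_ne hac (by lia) hxc)
    · exact .inr (cycleIcc_apply_ne hbd (by lia) (by lia))
  exact alternatingGroup_le_of_linked_of_isCycle_of_isCycle hσ hτ (Fin.isCycle_cycleIcc hac)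
    (Fin.isCycle_cycleIcc hbd) hmove he (cycleIcc_apply_ne hac le_rfl hac.le)
    (Fin.cycleIcc_of_lt hab) (cycleIcc_apply_ne hbd (by lia) (by lia)) (Fin.cycleIcc_of_gt hce)

theorem alternatingGroup_le_of_cycleIcc_left_mem (ha : (a : ℕ) = 0) (hd : (d : ℕ) + 1 = n)
    (hac : (a : ℕ) + 1 < c) (hcd : c < d) (hσ : Fin.cycleIcc a c ∈ G) (hτ : Fin.cycleIcc a d ∈ G) :
    alternatingGroup (Fin n) ≤ G := by
  obtain ⟨a', ha'⟩ : ∃ a' : Fin n, (a : ℕ) + 1 = a' := ⟨⟨a + 1, by lia⟩, rfl⟩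
  obtain ⟨c', hc⟩ : ∃ c' : Fin n, (c : ℕ) + 1 = c' := ⟨⟨c + 1, by lia⟩, rfl⟩
  have had : a < d := by lia
  have hmem : swap a a' * swap a c' ∈ G := by
    rw [← commutatorElement_cycleIcc_left (by lia) hcd ha' hc]
    exact commutatorElement_mem hτ hσ
  have hlinked : Linked G a (Fin.cycleIcc a d a) := by
    rw [cycleIcc_apply_eq le_rfl (by lia) ha']
    exact linked_of_swap_mul_swap_mem (by lia) (by lia) (by lia) hmem
  exact alternatingGroup_le_of_linked_of_isCycle hτ (Fin.isCycle_cycleIcc had)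
    (fun x ↦ cycleIcc_apply_ne had (by lia) (by lia)) hlinked

end Interval

section Existence
variable {n : ℕ}

theorem exists_isCycle_alternatingGroup_le_closure_self (hn : 3 ≤ n) :
    ∃ σ τ : Perm (Fin n), σ.IsCycle ∧ τ.IsCycle ∧ orderOf σ = n ∧ orderOf τ = n ∧
      alternatingGroup (Fin n) ≤ Subgroup.closure {σ, τ} := by
  set σ := finRotate n
  let x : Fin n := ⟨0, by lia⟩
  let s := swap x (σ x)
  have hσ : σ.IsCycle := isCycle_finRotate_of_le (by lia)
  have hmove (y : Fin n) : σ y ≠ y := by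
    rw [← mem_support, support_finRotate_of_le (by lia)]
    exact Finset.mem_univ y
  have hord : orderOf σ = n := by
    rw [← lcm_cycleType, cycleType_finRotate_of_le (by lia), Multiset.lcm_singleton, normalize_eq]
  have hsq : σ (σ x) ≠ x := by
    intro h
    have hone : σ ^ 2 = 1 := hσ.pow_eq_one_iff.mpr ⟨x, hmove x, h⟩
    have := orderOf_le_of_pow_eq_one two_pos hone
    lia
  refine ⟨σ, s * σ * s⁻¹, hσ, hσ.conj, hord, ?_, alternatingGroup_le_of_swap_conj_mem
    (Subgroup.subset_closure (.inl rfl)) hσ hmove hsq (Subgroup.subset_closure (.inr rfl))⟩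
  rw [← MulAut.conj_apply, MulEquiv.orderOf_eq, hord]

theorem exists_isCycle_alternatingGroup_le_closure {l₁ l₂ : ℕ} (h₁ : 3 ≤ l₁) (hodd : Odd l₁)
    (hle : l₁ ≤ l₂) (hn : l₂ ≤ n) (hsum : n < l₁ + l₂) :
    ∃ σ τ : Perm (Fin n), σ.IsCycle ∧ τ.IsCycle ∧ orderOf σ = l₁ ∧ orderOf τ = l₂ ∧
      alternatingGroup (Fin n) ≤ Subgroup.closure {σ, τ} := by
  obtain hl₁ | hl₁ := (hle.trans hn).eq_or_lt
  · obtain rfl : l₁ = l₂ := by lia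
    subst hl₁
    exact exists_isCycle_alternatingGroup_le_closure_self h₁
  obtain ⟨a, ha⟩ : ∃ a : Fin n, (a : ℕ) = 0 := ⟨⟨0, by lia⟩, rfl⟩
  obtain ⟨b, hb⟩ : ∃ b : Fin n, (b : ℕ) + l₂ = n := ⟨⟨n - l₂, by lia⟩, by grind⟩
  obtain ⟨c, hc⟩ : ∃ c : Fin n, (c : ℕ) + 1 = l₁ := ⟨⟨l₁ - 1, by lia⟩, by grind⟩
  obtain ⟨d, hd⟩ : ∃ d : Fin n, (d : ℕ) + 1 = n := ⟨⟨n - 1, by lia⟩, by grind⟩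
  have hac : a < c := by lia
  have hbd : b < d := by lia
  have heven : Even (c : ℕ) := by
    rwa [← hc, Nat.odd_add_one, Nat.not_odd_iff_even] at hodd
  refine ⟨Fin.cycleIcc a c, Fin.cycleIcc b d, Fin.isCycle_cycleIcc hac, Fin.isCycle_cycleIcc hbd,
    by rw [orderOf_cycleIcc hac]; lia, by rw [orderOf_cycleIcc hbd]; lia, ?_⟩
  have hσ : Fin.cycleIcc a c ∈ Subgroup.closure {Fin.cycleIcc a c, Fin.cycleIcc b d} :=
    Subgroup.subset_closure (.inl rfl)
  have hτ : Fin.cycleIcc b d ∈ Subgroup.closure {Fin.cycleIcc a c, Fin.cycleIcc b d} :=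
    Subgroup.subset_closure (.inr rfl)
  obtain rfl | hab := (show a ≤ b by lia).eq_or_lt
  · exact alternatingGroup_le_of_cycleIcc_left_mem ha hd (by lia) (by lia) hσ hτ
  · exact alternatingGroup_le_of_cycleIcc_mem ha hd hab (by lia) (by lia) (by lia) heven hσ hτ

end Existence

/-- Miller's theorem: for odd integers `ℓ₁, ℓ₂ ≥ 3` and `n` with
`ℓ₁, ℓ₂ ≤ n < ℓ₁ + ℓ₂`, there are cycles `σ₁, σ₂` in the alternating group on
`n` symbols of orders `ℓ₁` and `ℓ₂` which generate the alternating group. -/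
theorem stmt14 (l₁ l₂ n : ℕ) (h₁ : 3 ≤ l₁) (h₂ : 3 ≤ l₂)
    (hodd₁ : Odd l₁) (hodd₂ : Odd l₂)
    (hn₁ : l₁ ≤ n) (hn₂ : l₂ ≤ n) (hsum : n < l₁ + l₂) :
    ∃ σ₁ σ₂ : Equiv.Perm (Fin n),
      σ₁.IsCycle ∧ σ₂.IsCycle ∧
      orderOf σ₁ = l₁ ∧ orderOf σ₂ = l₂ ∧
      σ₁ ∈ alternatingGroup (Fin n) ∧ σ₂ ∈ alternatingGroup (Fin n) ∧
      Subgroup.closure {σ₁, σ₂} = alternatingGroup (Fin n) := by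
  wlog hle : l₁ ≤ l₂ generalizing l₁ l₂
  · obtain ⟨σ, τ, hσ, hτ, hσo, hτo, hσA, hτA, hgen⟩ :=
      this l₂ l₁ h₂ h₁ hodd₂ hodd₁ hn₂ hn₁ (by lia) (by lia)
    exact ⟨τ, σ, hτ, hσ, hτo, hσo, hτA, hσA, Set.pair_comm σ τ ▸ hgen⟩
  obtain ⟨σ, τ, hσ, hτ, rfl, rfl, hgen⟩ :=
    exists_isCycle_alternatingGroup_le_closure h₁ hodd₁ hle hn₂ hsum
  have hσA := mem_alternatingGroup_of_odd_orderOf hodd₁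
  have hτA := mem_alternatingGroup_of_odd_orderOf hodd₂
  refine ⟨σ, τ, hσ, hτ, rfl, rfl, hσA, hτA, le_antisymm ?_ hgen⟩
  rw [Subgroup.closure_le]
  exact Set.pair_subset hσA hτA
end

section
/- Let V and Y be sets and let A be a subgroup of the group of bijections of Y containing some element b ≠ id. For a bijection s of V and a function f : V → A, let w(s, f) denote the bijection of V × Y given by w(s, f)(v, y) = (s(v), f(s(v))(y)). Fix bijections h₁ and g₁ of V and a function g₂ : V → A. If w(g₁, g₂) ∘ w(h₁, f) = w(h₁, f) ∘ w(g₁, g₂) for every function f : V → A, then g₁ is the identity bijection of V. -/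
/-- The wreath-product action: for a bijection `s` of `V` and `f : V → A` with
`A` a subgroup of the bijections of `Y`, the bijection `w s f` of `V × Y` is
given by `w s f (v, y) = (s v, f (s v) y)`. -/
def wrAct {V Y : Type*} (A : Subgroup (Equiv.Perm Y)) (s : Equiv.Perm V) (f : V → A) :
    Equiv.Perm (V × Y) where
  toFun q := (s q.1, (f (s q.1) : Equiv.Perm Y) q.2)
  invFun q := (s.symm q.1, ((f q.1 : Equiv.Perm Y)).symm q.2)
  left_inv q := by simp
  right_inv q := by simp

/-! Comparing the fibre components of the two products shows that
`g₂ * f ∘ g₁⁻¹ = f * g₂ ∘ h₁⁻¹` for every `f`. Taking `f = 1` identifies `g₂` with `g₂ ∘ h₁⁻¹`.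
If `g₁⁻¹ x ≠ x`, the function `f` with value `b` at `g₁⁻¹ x` and `1` elsewhere then gives
`g₂ x * b = g₂ x`, contradicting `b ≠ 1`. -/

theorem eq_of_forall_mul_comp_eq_comp_mul {ι κ M : Type*} [MulOneClass M] [IsLeftCancelMul M]
    [Nontrivial M] {s t : ι → κ} {a c : ι → M} (h : ∀ f : κ → M, a * f ∘ s = f ∘ t * c) :
    s = t := by
  classical
  obtain ⟨b, hb⟩ := exists_ne (1 : M)
  have hac : a = c := by simpa using h 1
  funext x
  by_contra hx
  have hmul : a x * b = a x := by
    simpa [Ne.symm hx, ← hac] using congrFun (h (Pi.mulSingle (s x) b)) x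
  exact hb (mul_left_cancel (hmul.trans (mul_one (a x)).symm))

section wrAct

variable {V Y : Type*} {A : Subgroup (Equiv.Perm Y)}

theorem wrAct_mul_wrAct (s t : Equiv.Perm V) (f g : V → A) :
    wrAct A s f * wrAct A t g = wrAct A (s * t) (f * g ∘ ⇑s⁻¹) := by
  ext q <;> simp [wrAct]

theorem eq_of_wrAct_eq_wrAct {s t : Equiv.Perm V} {f g : V → A}
    (h : wrAct A s f = wrAct A t g) : f = g := by
  ext v y
  have hv := DFunLike.congr_fun h (s⁻¹ v, y)
  obtain ⟨hbase, hfibre⟩ :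
      v = t (s⁻¹ v) ∧ (f v : Equiv.Perm Y) y = (g (t (s⁻¹ v)) : Equiv.Perm Y) y := by
    simpa [wrAct] using hv
  rwa [← hbase] at hfibre

end wrAct

/-- If `A` contains an element `b ≠ 1`, and the wreath-product element
`w g₁ g₂` commutes with `w h₁ f` for every function `f : V → A`, then `g₁` is
the identity bijection of `V`. -/
theorem stmt15 {V Y : Type*} (A : Subgroup (Equiv.Perm Y)) (b : A) (hb : b ≠ 1)
    (h₁ g₁ : Equiv.Perm V) (g₂ : V → A)
    (hcomm : ∀ f : V → A, wrAct A g₁ g₂ * wrAct A h₁ f = wrAct A h₁ f * wrAct A g₁ g₂) :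
    g₁ = 1 := by
  have : Nontrivial A := nontrivial_of_ne b 1 hb
  have hfibre (f : V → A) : g₂ * f ∘ ⇑g₁⁻¹ = f ∘ id * g₂ ∘ ⇑h₁⁻¹ :=
    eq_of_wrAct_eq_wrAct <| by simpa only [wrAct_mul_wrAct, Function.comp_id] using hcomm f
  have hinv : ⇑g₁⁻¹ = id := eq_of_forall_mul_comp_eq_comp_mul hfibre
  exact inv_eq_one.1 (DFunLike.coe_injective hinv)
end
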